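/- Let $A_0$, $A_1$ generate the free associative algebra $F_2$ over $\mathbb{R}$ (or $\mathbb{C}$), with free Lie subalgebra $\mathfrak{f}_2$ and degree completions $\widehat{F}_2$, $\widehat{\mathfrak{f}}_2$. Let $\Phi \in \widehat{F}_2$ be the KZ associator, the renormalized holonomy $\Phi = G_1 G_0^{-1}$ of $G'(z) = (A_0/z + A_1/(z-1))G(z)$ on $]0,1[$, where $G_0(z) \sim z^{A_0}$ as $z \to 0^+$ and $G_1(z) \sim (1-z)^{A_1}$ as $z \to 1^-$. Then $\log(\Phi) = \sum_{n\geq 1} \sum \omega_{a_1,\dots,a_n}\, C^{a_1,\dots,a_n}_{i_1,\dots,i_n}\, \mathrm{CBH}_n(A_{i_n},\dots,A_{i_1})$, where the inner sum runs over admissible sequences $(a_1,\dots,a_n) \in \{0,1\}^n$ and all sequences $(i_1,\dots,i_n) \in \{0,1\}^n$, $\omega_{a_1,\dots,a_n}$ are the iterated-integral coefficients (multiple zeta values up to sign), and $C^{a_1,\dots,a_n}_{i_1,\dots,i_n}$ are the integer coefficients of Le and Murakami. -/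

import Mathlib

/-!
Common setup: a concrete model of the degree completion `F̂ₙ` of the free
associative algebra on `n` generators `x₁, …, xₙ` over a field `K` of
characteristic zero, as the space of formal (possibly infinite) `K`-linear
combinations of words in the letters `x₁, …, xₙ`, i.e. functions
`List (Fin n) → K` (the value at a word is its coefficient).  The product is
the (well-defined) convolution/concatenation product.  The free associative
algebra `Fₙ` sits inside as the finitely supported functions; the word `w`
corresponds to `delta w`, and `xᵢ = delta [i]`.
-/

noncomputable section

open Finset

namespace CBHPaper

/-- The degree completion `F̂ₙ` of the free associative algebra on `n`
generators over `K`: formal series of words, i.e. functions assigning to every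
word (a list over `Fin n`) its coefficient.  Addition and scalar
multiplication are pointwise (the `Pi` module structure). -/
abbrev Fhat (K : Type) (n : ℕ) : Type := List (Fin n) → K

variable {K : Type} [Field K] [CharZero K] {n : ℕ}

/-- The unit `1` of `F̂ₙ` (the empty word). -/
def oneF : Fhat K n := fun w => if w = [] then 1 else 0

/-- The word `w₀` (a product of generators), viewed as an element of `F̂ₙ`.
In particular `delta [i]` is the generator `xᵢ`. -/
def delta (w₀ : List (Fin n)) : Fhat K n := fun w => if w = w₀ then 1 else 0

/-- The (concatenation) product of `F̂ₙ`: the coefficient of a word `w` in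
`f * g` is the sum over all ways of splitting `w` as a concatenation `u ++ v`
of `f u * g v`. -/
def mulF (f g : Fhat K n) : Fhat K n :=
  fun w => ∑ i ∈ Finset.range (w.length + 1), f (w.take i) * g (w.drop i)

/-- Powers in `F̂ₙ`. -/
def powF (f : Fhat K n) : ℕ → Fhat K n
  | 0 => oneF
  | k + 1 => mulF f (powF f k)

/-- Ordered product of a finite list of elements of `F̂ₙ`. -/
def prodListF : List (Fhat K n) → Fhat K n
  | [] => oneF
  | f :: l => mulF f (prodListF l)

/-- The exponential series `exp f = ∑ₖ fᵏ/k!`; it is the genuine exponential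
when `f` has vanishing constant term (then the sum defining each coefficient
is finite, as accounted for by the truncation below). -/
def expF (f : Fhat K n) : Fhat K n :=
  fun w => ∑ k ∈ Finset.range (w.length + 1), (Nat.factorial k : K)⁻¹ * powF f k w

/-- The logarithm series `log X = ∑_{k ≥ 1} (-1)^{k+1} (X-1)ᵏ / k`; it is the
genuine logarithm (the inverse of `expF`) when `X` has constant term `1`. -/
def logF (X : Fhat K n) : Fhat K n :=
  fun w => ∑ k ∈ Finset.Icc 1 w.length,
    (-1 : K) ^ (k + 1) * (k : K)⁻¹ * powF (X - oneF) k w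

/-- `shuf w u v` is the number of ways of splitting the word `w` into a
subword equal to `u` and a complementary subword equal to `v`; these are the
structure constants of the coproduct `Δ` of `F̂ₙ` for which the generators are
primitive:  `Δ(w) = ∑_{S ⊆ positions of w} w|_S ⊗ w|_{Sᶜ}`. -/
def shuf : List (Fin n) → List (Fin n) → List (Fin n) → ℕ
  | [], u, v => if u = [] ∧ v = [] then 1 else 0
  | a :: w, u, v =>
      (match u with
        | b :: u' => if b = a then shuf w u' v else 0
        | [] => 0) +
      (match v with
        | b :: v' => if b = a then shuf w u v' else 0
        | [] => 0)

/-- The completed coproduct of `F̂ₙ` (for which the generators `xᵢ` are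
primitive), expressed coefficientwise: `coprodF X u v` is the coefficient of
`u ⊗ v` in `Δ(X)`.  Only words of length `|u| + |v|` contribute. -/
def coprodF (X : Fhat K n) (u v : List (Fin n)) : K :=
  ∑ c : Fin (u.length + v.length) → Fin n,
    (shuf (List.ofFn c) u v : K) * X (List.ofFn c)

/-- `X ∈ F̂ₙ` is group-like if `X = 1 + (higher degree)` and `Δ(X) = X ⊗ X`. -/
def IsGroupLike (X : Fhat K n) : Prop :=
  X [] = 1 ∧ ∀ u v, coprodF X u v = X u * X v

/-- The free Lie algebra `fₙ ⊆ Fₙ ⊆ F̂ₙ`: the smallest subspace containing the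
generators `xᵢ` and closed under the commutator bracket `[f,g] = fg - gf`. -/
inductive IsLieElem : Fhat K n → Prop
  | gen (i : Fin n) : IsLieElem (delta [i])
  | zero : IsLieElem 0
  | add {f g : Fhat K n} : IsLieElem f → IsLieElem g → IsLieElem (f + g)
  | smul (c : K) {f : Fhat K n} : IsLieElem f → IsLieElem (c • f)
  | lieBracket {f g : Fhat K n} : IsLieElem f → IsLieElem g →
      IsLieElem (mulF f g - mulF g f)

/-- The homogeneous component of degree `k` of an element of `F̂ₙ`. -/
def trunc (k : ℕ) (f : Fhat K n) : Fhat K n := fun w => if w.length = k then f w else 0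

/-- The completed free Lie algebra `f̂ₙ ⊆ F̂ₙ` (degree completion of `fₙ`):
every homogeneous component is a Lie element. -/
def IsLieElemHat (f : Fhat K n) : Prop := ∀ k, IsLieElem (trunc k f)

/-- `CBHₖ(x₁, …, xₖ)`: the multilinear part (the component of multidegree
`(1,…,1)`, i.e. the part supported on words of length `k` with pairwise
distinct letters) of `log (e^{x₁} ⋯ e^{xₖ})`, an element of `fₖ ⊆ F̂ₖ`. -/
def CBHuniv (K : Type) [Field K] [CharZero K] (k : ℕ) : Fhat K k :=
  fun w =>
    if w.length = k ∧ w.Nodup then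
      logF (prodListF (List.ofFn fun i : Fin k => expF (delta [i]))) w
    else 0

/-- The pushforward (substitution `yⱼ ↦ x_{φ(j)}`) along a map of generators
`φ : Fin k → Fin n`; it is the continuous algebra morphism `F̂ₖ → F̂ₙ` induced
by `φ`. -/
def pushF {k : ℕ} (φ : Fin k → Fin n) (f : Fhat K k) : Fhat K n :=
  fun v => ∑ u : Fin v.length → Fin k,
    if (List.ofFn u).map φ = v then f (List.ofFn u) else 0

/-- `CBH_k(x_{i₁}, …, x_{i_k})` for a word `w = (i₁, …, i_k)` over `Fin n`:
the image of the universal `CBHuniv k` under the substitution `yⱼ ↦ x_{iⱼ}`.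
This is `cbhₙ(x_{i₁} ⋯ x_{i_k})`. -/
def CBHword (w : List (Fin n)) : Fhat K n :=
  pushF w.get (CBHuniv K w.length)

/-- The completion `ĉbhₙ : F̂ₙ → f̂ₙ ⊆ F̂ₙ` of the linear map `cbhₙ` sending
the word `x_{i₁} ⋯ x_{i_k}` to `CBHₖ(x_{i₁}, …, x_{i_k})`:  writing
`X = ∑_w X(w)·w`, `ĉbhₙ(X) = ∑_w X(w)·CBHword w` (for each coefficient this
is a finite sum, since `CBHword w` is homogeneous of degree `|w|`). -/
def cbhHat (X : Fhat K n) : Fhat K n :=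
  fun v => ∑ c : Fin v.length → Fin n, X (List.ofFn c) * CBHword (List.ofFn c) v

/-- The symmetrized product `sym(z₁ ⊙ ⋯ ⊙ z_k) = (1/k!) ∑_σ z_{σ(1)} ⋯ z_{σ(k)}`.
As the `zᵢ` range over (completed) Lie elements, these elements span the image
of `Sᵏ` under the symmetrization map. -/
def symProd {k : ℕ} (z : Fin k → Fhat K n) : Fhat K n :=
  (Nat.factorial k : K)⁻¹ • ∑ σ : Equiv.Perm (Fin k), prodListF (List.ofFn (z ∘ σ))

end CBHPaper

namespace CBHPaper

open MeasureTheory Filter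

/-- The connection coefficient `A₀/z + A₁/(z-1)` of the KZ equation, as an
element of `F̂₂` (the generators being `A₀ = delta [0]`, `A₁ = delta [1]`). -/
def kzA (z : ℝ) : Fhat ℝ 2 :=
  z⁻¹ • delta [(0 : Fin 2)] + (z - 1)⁻¹ • delta [(1 : Fin 2)]

/-- The simplex `{0 ≤ t₁ ≤ ⋯ ≤ t_m ≤ 1}`. -/
def simplex01 (m : ℕ) : Set (Fin m → ℝ) :=
  {t | Monotone t ∧ ∀ j, t j ∈ Set.Icc (0 : ℝ) 1}

/-- The iterated integral `ω_{a₁,…,a_m} = ∫₀¹ ω_{a₁} ∘ ⋯ ∘ ω_{a_m}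
= ∫_{0 ≤ t₁ ≤ ⋯ ≤ t_m ≤ 1} ω_{a₁}(t₁) ∧ ⋯ ∧ ω_{a_m}(t_m)`, where
`ω₀(t) = dt/t` and `ω₁(t) = dt/(t-1)`.  For admissible `(a₁,…,a_m)` these
are, up to sign, the multiple zeta values. -/
def omegaMZV {m : ℕ} (a : Fin m → Fin 2) : ℝ :=
  ∫ t in simplex01 m, ∏ j, (if a j = 0 then (t j)⁻¹ else (t j - 1)⁻¹)

/-- The right-hand side of Le–Murakami's defining relation for the integer
coefficients `C^{a₁,…,a_m}_{i₁,…,i_m}`: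
`∑_{S ⊆ {α | a_α = 0}, T ⊆ {β | a_β = 1}} (-1)^{|S|+|T|} A₁^{|T|} A(a)^{S,T} A₀^{|S|}`,
where `A(a)^{S,T} = ∏_{α ∈ [1,m] ∖ (S ∪ T)} A_{a_α}`, the product in
decreasing order of the `α`'s. -/
def LMelem {m : ℕ} (a : Fin m → Fin 2) : Fhat ℝ 2 :=
  ∑ S : Finset (Fin m), ∑ T : Finset (Fin m),
    if (∀ α ∈ S, a α = 0) ∧ (∀ β ∈ T, a β = 1) then
      ((-1 : ℝ) ^ (S.card + T.card)) •
        mulF (powF (delta [(1 : Fin 2)]) T.card)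
          (mulF
            (delta ((((List.finRange m).reverse).filter
              (fun α => decide (α ∉ S ∪ T))).map a))
            (powF (delta [(0 : Fin 2)]) S.card))
    else 0

/-- The Le–Murakami coefficient `C^{a₁,…,a_m}_{i₁,…,i_m}`: since the words of
length `m` form a basis of the degree-`m` part of `F₂`, it is the coefficient
of the word `A_{i_m} ⋯ A_{i_1}` in `LMelem a`. -/
def Ccoef {m : ℕ} (a i : Fin m → Fin 2) : ℝ :=
  LMelem a (List.ofFn fun j => i (Fin.rev j))

/-!
For a group-like series, `log` and the extension `cbhHat` of `CBH` agree, since both are computed by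
the same alternating sum over deconcatenations, shuffled back into words. It remains to see that
the coefficients of `Φ` are those of the Le–Murakami expansion. The solutions `G₀`, `G₁`, hence `Φ`,
are group-like, because the defect of multiplicativity has zero derivative and vanishes at the base
point. For admissible `a`, the coefficient of `G₀(z)` at `a_m ⋯ a_1` is an iterated integral from
`0` to `z`, and it tends to the coefficient of `Φ` as `z → 1⁻`, so that this coefficient is
`ω_a`. The others follow from these: `Φ` is group-like without terms of degree one, so pairing it
with words in which some letters are extracted and shuffled gives zero, and this says precisely that
`Φ` is the sum of its coefficients against the elements `LMelem a`, which vanish unless `a` is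
admissible.
-/

/-! ### Formal series and the coproduct -/

section Series

variable {K : Type} [Field K] {n : ℕ}

/-- The left derivative `∂ₐX`, collecting the words of `X` that begin with the letter `a`:
`X = X [] + ∑ₐ xₐ · ∂ₐX`. -/
def leftDeriv (a : Fin n) (X : Fhat K n) : Fhat K n := fun w => X (a :: w)

theorem mulF_nil (X Y : Fhat K n) : mulF X Y [] = X [] * Y [] := by
  simp [mulF]

theorem leftDeriv_mulF (a : Fin n) (X Y : Fhat K n) :
    leftDeriv a (mulF X Y) = X [] • leftDeriv a Y + mulF (leftDeriv a X) Y := by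
  funext w
  simp only [leftDeriv, mulF, List.length_cons, Finset.sum_range_succ' _ (w.length + 1),
    List.take_succ_cons, List.drop_succ_cons, List.take_zero, List.drop_zero, Pi.add_apply,
    Pi.smul_apply, smul_eq_mul]
  exact add_comm _ _

theorem mulF_cons (X Y : Fhat K n) (a : Fin n) (w : List (Fin n)) :
    mulF X Y (a :: w) = X [] * Y (a :: w) + mulF (leftDeriv a X) Y w :=
  congrFun (leftDeriv_mulF a X Y) w

theorem add_mulF (X Y Z : Fhat K n) : mulF (X + Y) Z = mulF X Z + mulF Y Z := by
  funext w
  simp [mulF, add_mul, Finset.sum_add_distrib]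

theorem smul_mulF (c : K) (X Y : Fhat K n) : mulF (c • X) Y = c • mulF X Y := by
  funext w
  simp [mulF, Finset.mul_sum, mul_assoc]

theorem zero_mulF (X : Fhat K n) : mulF 0 X = 0 := by
  funext w
  simp [mulF]

theorem delta_nil : (delta [] : Fhat K n) = oneF := rfl

theorem leftDeriv_delta_cons (a b : Fin n) (w : List (Fin n)) :
    leftDeriv a (delta (b :: w) : Fhat K n) = if a = b then delta w else 0 := by
  funext x
  by_cases h : a = b <;> simp [leftDeriv, delta, h]

theorem leftDeriv_oneF (a : Fin n) : leftDeriv a (oneF : Fhat K n) = 0 := by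
  funext w
  simp [leftDeriv, oneF]

theorem oneF_mulF (X : Fhat K n) : mulF oneF X = X := by
  funext w
  rcases w with _ | ⟨a, w⟩
  · simp [mulF_nil, oneF]
  · rw [mulF_cons, leftDeriv_oneF, zero_mulF]
    simp [oneF]

theorem delta_singleton_mulF_cons (a b : Fin n) (X : Fhat K n) (w : List (Fin n)) :
    mulF (delta [a]) X (b :: w) = if b = a then X w else 0 := by
  rw [mulF_cons, leftDeriv_delta_cons, delta_nil]
  split_ifs <;> simp [oneF_mulF, zero_mulF, delta]

theorem delta_mulF_delta (u v : List (Fin n)) :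
    mulF (delta u) (delta v) = (delta (u ++ v) : Fhat K n) := by
  funext w
  induction u generalizing w with
  | nil => rw [delta_nil, oneF_mulF, List.nil_append]
  | cons a u ih =>
    rcases w with _ | ⟨b, w⟩
    · simp [mulF_nil, delta]
    · rw [mulF_cons, leftDeriv_delta_cons]
      split_ifs with h <;> simp [ih, zero_mulF, delta, h]

theorem powF_delta_singleton (a : Fin n) (k : ℕ) :
    powF (delta [a]) k = (delta (List.replicate k a) : Fhat K n) := by
  induction k with
  | zero => rfl
  | succ k ih => rw [powF, ih, delta_mulF_delta, List.singleton_append, List.replicate_succ]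

theorem mulF_smul (c : K) (X Y : Fhat K n) : mulF X (c • Y) = c • mulF X Y := by
  funext w
  simp [mulF, Finset.mul_sum, mul_left_comm]

theorem powF_smul (c : K) (X : Fhat K n) (k : ℕ) : powF (c • X) k = c ^ k • powF X k := by
  induction k with
  | zero => simp [powF]
  | succ k ih => rw [powF, ih, powF, smul_mulF, mulF_smul, smul_smul, pow_succ']

theorem expF_smul_delta (c : K) (a : Fin n) (w : List (Fin n)) :
    expF (c • delta [a]) w =
      if ∀ b ∈ w, b = a then (w.length.factorial : K)⁻¹ * c ^ w.length else 0 := by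
  simp only [expF, powF_smul, powF_delta_singleton, Pi.smul_apply, delta, smul_eq_mul,
    List.eq_replicate_iff]
  rw [Finset.sum_eq_single_of_mem w.length (by simp)
    fun k _ hk => by rw [if_neg fun h => hk h.1.symm, mul_zero, mul_zero]]
  simp

theorem expF_smul_delta_nil (c : K) (a : Fin n) : (expF (c • delta [a]) : Fhat K n) [] = 1 := by
  simp [expF_smul_delta]

theorem mulF_eq_add_sum {X Y : Fhat K n} (hY : Y [] = 1) (w : List (Fin n)) :
    mulF X Y w = X w + ∑ i ∈ range w.length, X (w.take i) * Y (w.drop i) := by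
  rw [mulF, Finset.sum_range_succ, add_comm, List.take_length, List.drop_length, hY, mul_one]

theorem mulF_expF_smul_delta_concat {a b : Fin n} (hb : b ≠ a)
    (X : Fhat K n) (c : K) (w : List (Fin n)) :
    mulF X (expF (c • delta [a])) (w ++ [b]) = X (w ++ [b]) := by
  rw [mulF, Finset.sum_eq_single_of_mem (w ++ [b]).length (by simp) fun i hi hne => ?_]
  · rw [List.take_length, List.drop_length, expF_smul_delta_nil, mul_one]
  · have hi : i ≤ w.length := by
      rw [Finset.mem_range, List.length_append, List.length_singleton] at hi
      rw [List.length_append, List.length_singleton] at hne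
      omega
    rw [List.drop_append_of_le_length hi, expF_smul_delta, if_neg (by simp [hb]), mul_zero]

end Series

section Sums

variable {α M : Type*} [Fintype α] [AddCommMonoid M]

theorem sum_fin_succ_fun {m : ℕ} (F : (Fin (m + 1) → α) → M) :
    ∑ c, F c = ∑ a, ∑ c : Fin m → α, F (Fin.cons a c) := by
  rw [← Fintype.sum_prod_type']
  exact (Fintype.sum_equiv (Fin.consEquiv fun _ => α) _ _ fun _ => rfl).symm

theorem sum_fin_succ_fun_snoc {m : ℕ} (F : (Fin (m + 1) → α) → M) :
    ∑ c, F c = ∑ a, ∑ c : Fin m → α, F (Fin.snoc c a) := by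
  rw [← Fintype.sum_prod_type']
  exact (Fintype.sum_equiv (Fin.snocEquiv fun _ => α) _ _ fun _ => rfl).symm

end Sums

section Coproduct

variable {K : Type} [Field K] {n : ℕ}

theorem coprodF_eq_sum (X : Fhat K n) (u v : List (Fin n)) {N : ℕ}
    (hN : u.length + v.length = N) :
    coprodF X u v = ∑ c : Fin N → Fin n, (shuf (List.ofFn c) u v : K) * X (List.ofFn c) := by
  subst hN
  rfl

theorem coprodF_add (X Y : Fhat K n) (u v : List (Fin n)) :
    coprodF (X + Y) u v = coprodF X u v + coprodF Y u v := by
  simp [coprodF, mul_add, Finset.sum_add_distrib]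

theorem coprodF_smul (c : K) (X : Fhat K n) (u v : List (Fin n)) :
    coprodF (c • X) u v = c * coprodF X u v := by
  simp [coprodF, Finset.mul_sum, mul_left_comm]

theorem coprodF_zero (u v : List (Fin n)) : coprodF (0 : Fhat K n) u v = 0 := by
  simp [coprodF]

theorem coprodF_nil_nil (X : Fhat K n) : coprodF X [] [] = X [] := by
  simp [coprodF, shuf]

theorem coprodF_eq_sum_leftDeriv (X : Fhat K n) (u v : List (Fin n)) {N : ℕ}
    (hN : u.length + v.length = N + 1) :
    coprodF X u v = ∑ a, ∑ c : Fin N → Fin n,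
      (shuf (a :: List.ofFn c) u v : K) * leftDeriv a X (List.ofFn c) := by
  simp only [coprodF_eq_sum X u v hN, sum_fin_succ_fun, List.ofFn_cons, leftDeriv]

theorem coprodF_nil_left (X : Fhat K n) (v : List (Fin n)) : coprodF X [] v = X v := by
  induction v generalizing X with
  | nil => exact coprodF_nil_nil X
  | cons b v ih =>
    have h : coprodF X [] (b :: v) = coprodF (leftDeriv b X) [] v := by
      rw [coprodF_eq_sum_leftDeriv X [] (b :: v) (by simp : _ = v.length + 1),
        coprodF_eq_sum _ [] v (by simp : _ = v.length),
        Finset.sum_eq_single_of_mem b (mem_univ b) fun a _ ha => by simp [shuf, ha.symm]]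
      simp [shuf]
    exact h.trans (ih _)

theorem coprodF_nil_right (X : Fhat K n) (u : List (Fin n)) : coprodF X u [] = X u := by
  induction u generalizing X with
  | nil => exact coprodF_nil_nil X
  | cons b u ih =>
    have h : coprodF X (b :: u) [] = coprodF (leftDeriv b X) u [] := by
      rw [coprodF_eq_sum_leftDeriv X (b :: u) [] (by simp : _ = u.length + 1),
        coprodF_eq_sum _ u [] (by simp : _ = u.length),
        Finset.sum_eq_single_of_mem b (mem_univ b) fun a _ ha => by simp [shuf, ha.symm]]
      simp [shuf]
    exact h.trans (ih _)

theorem coprodF_cons_cons (X : Fhat K n) (a b : Fin n) (u v : List (Fin n)) :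
    coprodF X (a :: u) (b :: v) =
      coprodF (leftDeriv a X) u (b :: v) + coprodF (leftDeriv b X) (a :: u) v := by
  have hN : u.length + (b :: v).length = (a :: u).length + v.length := by
    simp only [List.length_cons]
    omega
  rw [coprodF_eq_sum _ u (b :: v) hN, coprodF_eq_sum _ (a :: u) v rfl,
    coprodF_eq_sum_leftDeriv X (a :: u) (b :: v) (N := (a :: u).length + v.length) rfl]
  simp [shuf, add_mul, Finset.sum_add_distrib, ite_mul]

theorem coprodF_comp_map {m : ℕ} (φ : Fin m → Fin n) (X : Fhat K n) (u v : List (Fin m)) :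
    coprodF (fun w => X (w.map φ)) u v = coprodF X (u.map φ) (v.map φ) := by
  induction u generalizing v X with
  | nil => simp [coprodF_nil_left]
  | cons a u ihu =>
    induction v generalizing X with
    | nil => simp [coprodF_nil_right]
    | cons b v ihv =>
      rw [List.map_cons, List.map_cons, coprodF_cons_cons, coprodF_cons_cons, ← List.map_cons,
        ← List.map_cons, ← ihu, ← ihv]
      rfl

theorem coprodF_replicate (X : Fhat K n) (a : Fin n) (i j : ℕ) :
    coprodF X (List.replicate i a) (List.replicate j a) =
      (i + j).choose i * X (List.replicate (i + j) a) := by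
  induction i generalizing X j with
  | zero => simp [coprodF_nil_left]
  | succ i ihi =>
    induction j generalizing X with
    | zero => simp [coprodF_nil_right]
    | succ j ihj =>
      rw [List.replicate_succ, List.replicate_succ, coprodF_cons_cons, ← List.replicate_succ,
        ← List.replicate_succ, ihi, ihj, (by omega : i + 1 + (j + 1) = i + (j + 1) + 1),
        Nat.choose_succ_succ, (by omega : i + 1 + j = i + (j + 1)), List.replicate_succ]
      simp only [leftDeriv]
      push_cast
      ring

theorem coprodF_mulF (X Y : Fhat K n) (u v : List (Fin n)) :
    coprodF (mulF X Y) u v =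
      ∑ i ∈ range (u.length + 1), ∑ j ∈ range (v.length + 1),
        coprodF X (u.take i) (v.take j) * coprodF Y (u.drop i) (v.drop j) := by
  induction u generalizing v X with
  | nil => simp [coprodF_nil_left, mulF]
  | cons a u ihu =>
    induction v generalizing X with
    | nil => simp [coprodF_nil_right, mulF]
    | cons b v ihv =>
      rw [coprodF_cons_cons, leftDeriv_mulF, leftDeriv_mulF, coprodF_add, coprodF_add, ihu, ihv]
      simp only [List.length_cons, Finset.sum_range_succ' _ (v.length + 1),
        Finset.sum_range_succ' _ (u.length + 1), List.take_succ_cons, List.drop_succ_cons,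
        List.take_zero, List.drop_zero, coprodF_cons_cons, coprodF_nil_left, coprodF_nil_right,
        coprodF_smul, leftDeriv, add_mul, Finset.sum_add_distrib]
      ring

theorem perm_of_shuf_ne_zero {w u v : List (Fin n)} (h : shuf w u v ≠ 0) : w.Perm (u ++ v) := by
  induction w generalizing u v with
  | nil => simp_all [shuf]
  | cons a w ih =>
    rw [shuf.eq_def] at h
    rcases not_and_or.mp (mt Nat.add_eq_zero_iff.mpr h) with h | h
    · rcases u with _ | ⟨b, u⟩
      · exact absurd rfl h
      · obtain ⟨rfl, hw⟩ := ite_ne_right_iff.mp h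
        exact (ih hw).cons b
    · rcases v with _ | ⟨b, v⟩
      · exact absurd rfl h
      · obtain ⟨rfl, hw⟩ := ite_ne_right_iff.mp h
        exact ((ih hw).cons b).trans List.perm_middle.symm

theorem coprodF_congr {X Y : Fhat K n} {u v : List (Fin n)}
    (h : ∀ w, w.Perm (u ++ v) → X w = Y w) : coprodF X u v = coprodF Y u v := by
  refine Finset.sum_congr rfl fun c _ => ?_
  by_cases hc : shuf (List.ofFn c) u v = 0
  · simp [hc]
  · rw [h _ (perm_of_shuf_ne_zero hc)]

theorem coprodF_eq_zero {X : Fhat K n} {u v : List (Fin n)}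
    (h : ∀ w, w.Perm (u ++ v) → X w = 0) : coprodF X u v = 0 :=
  (coprodF_congr h).trans (coprodF_zero u v)

end Coproduct

section GroupLike

variable {K : Type} [Field K] {n : ℕ}

/-- The failure `Δ(X) - X ⊗ X` of the series `X` to be group-like. -/
def coprodDefect (X : Fhat K n) (u v : List (Fin n)) : K := coprodF X u v - X u * X v

theorem isGroupLike_of_coprodDefect_eq_zero {X : Fhat K n} (hX : X [] = 1)
    (h : ∀ u v, (∀ u' v', u'.length + v'.length < u.length + v.length →
      coprodDefect X u' v' = 0) → coprodDefect X u v = 0) : IsGroupLike X := by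
  refine ⟨hX, fun u v => sub_eq_zero.mp ?_⟩
  induction hN : u.length + v.length using Nat.strong_induction_on generalizing u v with
  | _ N ih => exact h u v fun u' v' hlt => ih _ (hN ▸ hlt) u' v' rfl

theorem coprodDefect_nil_left {X : Fhat K n} (hX : X [] = 1) (v : List (Fin n)) :
    coprodDefect X [] v = 0 := by
  simp [coprodDefect, coprodF_nil_left, hX]

theorem coprodDefect_nil_right {X : Fhat K n} (hX : X [] = 1) (u : List (Fin n)) :
    coprodDefect X u [] = 0 := by
  simp [coprodDefect, coprodF_nil_right, hX]

theorem IsGroupLike.coprodDefect_eq_zero {X : Fhat K n} (hX : IsGroupLike X)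
    (u v : List (Fin n)) : coprodDefect X u v = 0 :=
  sub_eq_zero.mpr (hX.2 u v)

/-- The coproduct is multiplicative, so only the two extreme terms `X ⊗ 1` and `1 ⊗ Y` of
`Δ(X)Δ(Y) - (X ⊗ X)(Y ⊗ Y)` can contribute. -/
theorem coprodDefect_mulF {X Y : Fhat K n} (hX : X [] = 1) (hY : Y [] = 1) {u v : List (Fin n)}
    (hX' : ∀ u' v', u'.length + v'.length < u.length + v.length → coprodDefect X u' v' = 0)
    (hY' : ∀ u' v', u'.length + v'.length < u.length + v.length → coprodDefect Y u' v' = 0) :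
    coprodDefect (mulF X Y) u v = coprodDefect X u v + coprodDefect Y u v := by
  obtain huv | huv := Nat.eq_zero_or_pos (u.length + v.length)
  · obtain rfl : u = [] := by rw [← List.length_eq_zero_iff]; omega
    simp [coprodDefect_nil_left, hX, hY, mulF_nil]
  have hterm (i j : ℕ) (hij : 0 < i ∨ 0 < j) (hi : i ≤ u.length) (hj : j ≤ v.length)
      (hne : i ≠ u.length ∨ j ≠ v.length) :
      coprodF X (u.take i) (v.take j) * coprodF Y (u.drop i) (v.drop j) -
        X (u.take i) * Y (u.drop i) * (X (v.take j) * Y (v.drop j)) = 0 := by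
    rw [sub_eq_zero.mp (hX' (u.take i) (v.take j) (by simp; omega)),
      sub_eq_zero.mp (hY' (u.drop i) (v.drop j) (by simp; omega))]
    ring
  rw [coprodDefect, coprodF_mulF, mulF, mulF, Finset.sum_mul_sum, ← Finset.sum_product',
    ← Finset.sum_product', ← Finset.sum_sub_distrib,
    Finset.sum_eq_add (u.length, v.length) (0, 0)]
  · simp [coprodDefect, coprodF_nil_left, hX, hY]
  · simp only [ne_eq, Prod.mk.injEq]
    omega
  · rintro ⟨i, j⟩ hij hne
    simp only [mem_product, mem_range, ne_eq, Prod.mk.injEq] at hij hne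
    exact hterm i j (by omega) (by omega) (by omega) (by omega)
  · simp
  · simp

theorem oneF_isGroupLike : IsGroupLike (oneF : Fhat K n) := by
  refine isGroupLike_of_coprodDefect_eq_zero rfl fun u v _ => ?_
  rcases u with _ | ⟨a, u⟩
  · exact coprodDefect_nil_left rfl v
  rcases v with _ | ⟨b, v⟩
  · exact coprodDefect_nil_right rfl _
  simp [coprodDefect, coprodF_cons_cons, leftDeriv_oneF, coprodF_zero, oneF]

theorem mulF_isGroupLike {X Y : Fhat K n} (hX : IsGroupLike X) (hY : IsGroupLike Y) :
    IsGroupLike (mulF X Y) := by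
  refine isGroupLike_of_coprodDefect_eq_zero (by simp [mulF_nil, hX.1, hY.1]) fun u v _ => ?_
  rw [coprodDefect_mulF hX.1 hY.1 (fun u' v' _ => hX.coprodDefect_eq_zero u' v')
    fun u' v' _ => hY.coprodDefect_eq_zero u' v', hX.coprodDefect_eq_zero,
    hY.coprodDefect_eq_zero, add_zero]

theorem IsGroupLike.of_mulF {X Y : Fhat K n} (hX : IsGroupLike X)
    (hXY : IsGroupLike (mulF X Y)) : IsGroupLike Y := by
  have hY : Y [] = 1 := by simpa [mulF_nil, hX.1] using hXY.1
  refine isGroupLike_of_coprodDefect_eq_zero hY fun u v ih => ?_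
  have h := coprodDefect_mulF hX.1 hY (fun u' v' _ => hX.coprodDefect_eq_zero u' v') ih
  rwa [hXY.coprodDefect_eq_zero, hX.coprodDefect_eq_zero, zero_add, eq_comm] at h

theorem IsGroupLike.comp_map {m : ℕ} {X : Fhat K n} (hX : IsGroupLike X) (φ : Fin m → Fin n) :
    IsGroupLike (fun w => X (w.map φ)) :=
  ⟨hX.1, fun u v => by rw [coprodF_comp_map, hX.2]⟩

theorem expF_smul_delta_isGroupLike [CharZero K] (c : K) (a : Fin n) :
    IsGroupLike (expF (c • delta [a]) : Fhat K n) := by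
  refine ⟨expF_smul_delta_nil c a, fun u v => ?_⟩
  by_cases h : ∀ b ∈ u ++ v, b = a
  · have hu := List.eq_replicate_of_mem fun b hb => h b (List.mem_append_left v hb)
    have hv := List.eq_replicate_of_mem fun b hb => h b (List.mem_append_right u hb)
    have hmem (k : ℕ) : ∀ b ∈ List.replicate k a, b = a := fun b => List.eq_of_mem_replicate
    rw [hu, hv, coprodF_replicate, expF_smul_delta, expF_smul_delta, expF_smul_delta,
      if_pos (hmem _), if_pos (hmem _), if_pos (hmem _), Nat.cast_add_choose]
    simp only [List.length_replicate, pow_add]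
    have (k : ℕ) : (k.factorial : K) ≠ 0 := mod_cast k.factorial_ne_zero
    field_simp [this]
  · rw [coprodF_eq_zero fun w hw => ?_, expF_smul_delta, expF_smul_delta]
    · simp only [List.mem_append, or_imp, forall_and, not_and_or] at h
      rcases h with h | h <;> simp [h]
    · rw [expF_smul_delta, if_neg fun hw' => h fun b hb => hw' b (hw.mem_iff.mpr hb)]

end GroupLike

/-! ### The Le–Murakami elements -/

section RevWord

variable {α β : Type*} {m : ℕ}

/-- The word `a_m ⋯ a_1` attached to a sequence `(a_1, …, a_m)`: the letters are multiplied in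
decreasing order of their indices. -/
def revWord (a : Fin m → α) : List α := (List.ofFn a).reverse

theorem revWord_eq_ofFn_rev (a : Fin m → α) : revWord a = List.ofFn fun j => a (Fin.rev j) := by
  rw [revWord, List.ofFn_eq_map, ← List.map_reverse, List.finRange_reverse, List.map_map,
    List.ofFn_eq_map]
  rfl

theorem length_revWord (a : Fin m → α) : (revWord a).length = m := by
  simp [revWord]

theorem map_revWord (f : α → β) (a : Fin m → α) :
    (revWord a).map f = revWord fun j => f (a j) := by
  simp only [revWord, List.map_reverse, List.map_ofFn, Function.comp_def]

theorem revWord_succ (a : Fin (m + 1) → α) :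
    revWord a = revWord (fun j => a j.succ) ++ [a 0] := by
  simp [revWord, List.ofFn_succ]

theorem revWord_succ_last (a : Fin (m + 1) → α) :
    revWord a = a (Fin.last m) :: revWord fun j => a j.castSucc := by
  rw [revWord, List.ofFn_succ', List.concat_eq_append, List.reverse_append]
  rfl

theorem sum_revWord {M : Type*} [AddCommMonoid M] [Fintype α] (F : List α → M) :
    ∑ a : Fin m → α, F (revWord a) = ∑ a : Fin m → α, F (List.ofFn a) := by
  simp only [revWord_eq_ofFn_rev]
  exact (Equiv.arrowCongr Fin.revPerm (Equiv.refl α)).sum_comp fun a => F (List.ofFn a)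

end RevWord

section MarkedWords

variable {n : ℕ}

/-- In a word whose letters may be marked for extraction, the multiset of marked letters. -/
def marked (l : List (Fin n × Bool)) : Multiset (Fin n) := ↑((l.filter Prod.snd).map Prod.fst)

/-- The word of the letters that are not marked for extraction. -/
def unmarked (l : List (Fin n × Bool)) : List (Fin n) := (l.filter fun x => !x.2).map Prod.fst

variable {K : Type} [Field K]

/-- The pairing of `X` with the words of length `m` with marked letters, weighted by a function
`F` of the marked and of the unmarked letters. -/
def markedSum (m : ℕ) (X : Fhat K n) (F : Multiset (Fin n) → List (Fin n) → K) : K :=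
  ∑ c : Fin m → Fin n × Bool,
    X ((List.ofFn c).map Prod.fst) * F (marked (List.ofFn c)) (unmarked (List.ofFn c))

theorem markedSum_zero (X : Fhat K n) (F : Multiset (Fin n) → List (Fin n) → K) :
    markedSum 0 X F = X [] * F 0 [] := by
  simp [markedSum, marked, unmarked]

theorem markedSum_succ (m : ℕ) (X : Fhat K n) (F : Multiset (Fin n) → List (Fin n) → K) :
    markedSum (m + 1) X F =
      ∑ b, (markedSum m (leftDeriv b X) (fun s u => F (b ::ₘ s) u) +
        markedSum m (leftDeriv b X) fun s u => F s (b :: u)) := by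
  simp only [markedSum, sum_fin_succ_fun, Fintype.sum_prod_type, Fintype.sum_bool,
    ← Finset.sum_add_distrib]
  simp [leftDeriv, marked, unmarked]

theorem markedSum_add_left (m : ℕ) (X Y : Fhat K n) (F : Multiset (Fin n) → List (Fin n) → K) :
    markedSum m (X + Y) F = markedSum m X F + markedSum m Y F := by
  simp [markedSum, add_mul, Finset.sum_add_distrib]

theorem markedSum_add_right (m : ℕ) (X : Fhat K n) (F G : Multiset (Fin n) → List (Fin n) → K) :
    markedSum m X (F + G) = markedSum m X F + markedSum m X G := by
  simp [markedSum, mul_add, Finset.sum_add_distrib]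

theorem markedSum_sum_right {ι : Type*} [Fintype ι] (m : ℕ) (X : Fhat K n)
    (F : ι → Multiset (Fin n) → List (Fin n) → K) :
    markedSum m X (∑ i, F i) = ∑ i, markedSum m X (F i) := by
  simp only [markedSum, Finset.sum_apply, Finset.mul_sum]
  exact Finset.sum_comm

theorem count_mul_erase_cons (F : Multiset (Fin n) → K) (a b : Fin n) (s : Multiset (Fin n)) :
    ((b ::ₘ s).count a : K) * F ((b ::ₘ s).erase a) =
      s.count a * F (b ::ₘ s.erase a) + if b = a then F s else 0 := by
  by_cases h : b = a
  · subst h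
    by_cases hs : b ∈ s
    · simp [Multiset.cons_erase hs, add_mul]
    · simp [Multiset.count_eq_zero_of_notMem hs]
  · simp [h, Ne.symm h, Multiset.erase_cons_tail _ h]

/-- Inserting the letter `a` anywhere amounts to marking one more letter `a`. -/
theorem markedSum_coprodF_singleton (m : ℕ) (X : Fhat K n) (a : Fin n)
    (F : Multiset (Fin n) → List (Fin n) → K) :
    markedSum m (coprodF X [a]) F =
      markedSum (m + 1) X fun s u => s.count a * F (s.erase a) u := by
  induction m generalizing X F with
  | zero => simp [markedSum_succ, markedSum_zero, coprodF_nil_right, leftDeriv,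
      Multiset.count_singleton, ite_mul]
  | succ m ih =>
    have hleft (b : Fin n) : leftDeriv b (coprodF X [a]) =
        leftDeriv b (leftDeriv a X) + coprodF (leftDeriv b X) [a] := by
      funext w
      simp only [leftDeriv, coprodF_cons_cons, coprodF_nil_left, Pi.add_apply]
    have hright (b : Fin n) : (fun s u => ((b ::ₘ s).count a : K) * F ((b ::ₘ s).erase a) u) =
        (fun s u => s.count a * F (b ::ₘ s.erase a) u) + fun s u => if b = a then F s u else 0 :=
      funext₂ fun s u => count_mul_erase_cons (F · u) a b s
    have hsum : ∑ b, markedSum (m + 1) (leftDeriv b X) (fun s u => if b = a then F s u else 0) =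
        markedSum (m + 1) (leftDeriv a X) F := by
      rw [Finset.sum_eq_single_of_mem a (mem_univ a) fun b _ hb => by simp [markedSum, hb]]
      simp
    rw [markedSum_succ, markedSum_succ (m + 1)]
    simp only [hleft, hright, markedSum_add_left, markedSum_add_right, ih,
      Finset.sum_add_distrib, hsum, markedSum_succ m (leftDeriv a X)]
    ring

theorem markedSum_eq_sum_of_forall_ne_zero (m : ℕ) (X : Fhat K n)
    {F : Multiset (Fin n) → List (Fin n) → K} (hF : ∀ s ≠ 0, ∀ u, F s u = 0) :
    markedSum m X F = ∑ u : Fin m → Fin n, X (List.ofFn u) * F 0 (List.ofFn u) := by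
  induction m generalizing X F with
  | zero => simp [markedSum_zero]
  | succ m ih =>
    have hcons (b : Fin n) : (fun s u => F (b ::ₘ s) u) = fun _ _ => 0 :=
      funext₂ fun s u => hF _ (Multiset.cons_ne_zero) u
    simp only [markedSum_succ, sum_fin_succ_fun, hcons]
    refine Finset.sum_congr rfl fun b _ => ?_
    rw [ih _ fun s hs u => hF s hs _]
    simp [markedSum, leftDeriv]

theorem IsGroupLike.markedSum_eq_sum [CharZero K] {X : Fhat K n} (hX : IsGroupLike X)
    (h1 : ∀ a, X [a] = 0) (m : ℕ) (F : Multiset (Fin n) → List (Fin n) → K) :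
    markedSum m X F = ∑ u : Fin m → Fin n, X (List.ofFn u) * F 0 (List.ofFn u) := by
  have hcount (a : Fin n) (G : Multiset (Fin n) → List (Fin n) → K) :
      markedSum m X (fun s u => s.count a * G (s.erase a) u) = 0 := by
    rcases m with _ | m
    · simp [markedSum_zero]
    · have hXa : coprodF X [a] = 0 := funext fun w => by simp [hX.2, h1]
      rw [← markedSum_coprodF_singleton, hXa]
      simp [markedSum]
  have hF : F = (fun s u => if s = 0 then F s u else 0) +
      ∑ a, fun s u => s.count a * (((a ::ₘ s.erase a).card : K)⁻¹ * F (a ::ₘ s.erase a) u) := by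
    funext s u
    have hterm (a : Fin n) : (s.count a : K) *
        (((a ::ₘ s.erase a).card : K)⁻¹ * F (a ::ₘ s.erase a) u) =
          s.count a * ((s.card : K)⁻¹ * F s u) := by
      by_cases ha : a ∈ s
      · rw [Multiset.cons_erase ha]
      · simp [Multiset.count_eq_zero_of_notMem ha]
    simp only [Pi.add_apply, Finset.sum_apply, hterm, ← Finset.sum_mul, ← Nat.cast_sum,
      Multiset.sum_count_eq_card fun a _ => mem_univ a]
    by_cases hs : s = 0
    · simp [hs]
    · rw [if_neg hs, zero_add, mul_inv_cancel_left₀ (by simpa using hs)]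
  conv_lhs => rw [hF]
  rw [markedSum_add_right, markedSum_sum_right,
    Finset.sum_eq_zero fun a _ => hcount a fun s u => ((a ::ₘ s).card : K)⁻¹ * F (a ::ₘ s) u,
    add_zero, markedSum_eq_sum_of_forall_ne_zero m X fun s hs u => if_neg hs]
  simp

end MarkedWords

section LeMurakami

variable {m : ℕ}

theorem sum_sum_ite_eq_sum_bool {M : Type*} [AddCommMonoid M] (a : Fin m → Fin 2)
    (F : Finset (Fin m) → Finset (Fin m) → M) :
    (∑ S, ∑ T, if (∀ α ∈ S, a α = 0) ∧ (∀ β ∈ T, a β = 1) then F S T else 0) =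
      ∑ r : Fin m → Bool, F (univ.filter fun j => (a j, r j) = (0, true))
        (univ.filter fun j => (a j, r j) = (1, true)) := by
  rw [← Fintype.sum_prod_type', ← Finset.sum_filter]
  refine Finset.sum_nbij' (fun p j => decide (j ∈ p.1 ∪ p.2))
    (fun r => (univ.filter fun j => (a j, r j) = (0, true),
      univ.filter fun j => (a j, r j) = (1, true))) (by simp) (by simp +contextual) ?_ ?_ ?_
  · rintro ⟨S, T⟩ h
    simp only [mem_filter, mem_univ, true_and] at h
    ext j <;> simp <;> grind
  · intro r _
    funext j
    obtain h | h : a j = 0 ∨ a j = 1 := by omega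
    all_goals simp [h]
  · rintro ⟨S, T⟩ h
    simp only [mem_filter, mem_univ, true_and] at h
    congr 1 <;> ext j <;> simp <;> grind

/-- The Le–Murakami term `(-1)^{|s|} A₁^{s(1)} u A₀^{s(0)}` in which the letters of `s` are
extracted from a word, leaving `u`. -/
def leMurakamiTerm (s : Multiset (Fin 2)) (u : List (Fin 2)) : Fhat ℝ 2 :=
  (-1 : ℝ) ^ s.card • delta (List.replicate (s.count 1) 1 ++ (u ++ List.replicate (s.count 0) 0))

theorem count_marked_revWord {n : ℕ} (a : Fin m → Fin n) (r : Fin m → Bool) (b : Fin n) :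
    (marked (revWord fun j => (a j, r j))).count b =
      (univ.filter fun j => (a j, r j) = (b, true)).card := by
  rw [marked, revWord, Multiset.coe_count, List.count_eq_countP, List.countP_map,
    List.countP_filter, List.countP_reverse, List.ofFn_eq_map, List.countP_map,
    List.countP_eq_length_filter, ← Multiset.coe_card, Finset.card_def, Finset.filter_val]
  congr 1
  refine congrArg (fun p => ((List.finRange m).filter p : Multiset (Fin m))) (funext fun j => ?_)
  simp [beq_eq_decide]

theorem unmarked_revWord {n : ℕ} (a : Fin m → Fin n) (r : Fin m → Bool) :
    unmarked (revWord fun j => (a j, r j)) =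
      ((List.finRange m).reverse.filter fun j => !r j).map a := by
  rw [unmarked, revWord, List.ofFn_eq_map, ← List.map_reverse, List.filter_map, List.map_map]
  rfl

theorem LMelem_eq_sum (a : Fin m → Fin 2) :
    LMelem a = ∑ r : Fin m → Bool,
      leMurakamiTerm (marked (revWord fun j => (a j, r j)))
        (unmarked (revWord fun j => (a j, r j))) := by
  rw [LMelem, sum_sum_ite_eq_sum_bool a]
  refine Finset.sum_congr rfl fun r _ => ?_
  have hcard (s : Multiset (Fin 2)) : s.card = s.count 0 + s.count 1 := by
    rw [← Multiset.sum_count_eq_card fun a _ => mem_univ a, Fin.sum_univ_two]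
  rw [leMurakamiTerm, hcard, count_marked_revWord, count_marked_revWord, powF_delta_singleton,
    powF_delta_singleton, delta_mulF_delta, delta_mulF_delta, unmarked_revWord]
  congr 6
  funext j
  obtain h | h : a j = 0 ∨ a j = 1 := by omega
  all_goals simp [h]

theorem LMelem_eq_zero_of_last (a : Fin (m + 1) → Fin 2) (ha : a (Fin.last m) = 1) :
    LMelem a = 0 := by
  rw [LMelem_eq_sum, sum_fin_succ_fun_snoc, Fintype.sum_bool, ← Finset.sum_add_distrib]
  refine Finset.sum_eq_zero fun r _ => ?_
  have hone (k : ℕ) (u : List (Fin 2)) :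
      List.replicate k 1 ++ 1 :: u = 1 :: (List.replicate k 1 ++ u) := by
    rw [List.append_cons, ← List.replicate_succ', List.replicate_succ, List.cons_append]
  simp [revWord_succ_last, ha, leMurakamiTerm, marked, unmarked, pow_succ, List.replicate_succ,
    hone]

theorem LMelem_eq_zero_of_first (a : Fin (m + 1) → Fin 2) (ha : a 0 = 0) : LMelem a = 0 := by
  rw [LMelem_eq_sum, sum_fin_succ_fun, Fintype.sum_bool, ← Finset.sum_add_distrib]
  refine Finset.sum_eq_zero fun r _ => ?_
  simp [revWord_succ, ha, leMurakamiTerm, marked, unmarked, pow_succ, List.replicate_succ]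

theorem IsGroupLike.sum_mul_LMelem {X : Fhat ℝ 2} (hX : IsGroupLike X) (h1 : ∀ a, X [a] = 0)
    (w : List (Fin 2)) :
    ∑ a : Fin w.length → Fin 2, X (revWord a) * LMelem a w = X w := by
  calc ∑ a : Fin w.length → Fin 2, X (revWord a) * LMelem a w
      = ∑ c : Fin w.length → Fin 2 × Bool, X ((revWord c).map Prod.fst) *
          leMurakamiTerm (marked (revWord c)) (unmarked (revWord c)) w := by
        rw [← (Equiv.arrowProdEquivProdArrow (Fin w.length) (fun _ => Fin 2)
          fun _ => Bool).symm.sum_comp, Fintype.sum_prod_type]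
        simp only [map_revWord, LMelem_eq_sum, Finset.sum_apply, Finset.mul_sum]
        rfl
    _ = markedSum w.length X fun s u => leMurakamiTerm s u w :=
        sum_revWord fun l => X (l.map Prod.fst) * leMurakamiTerm (marked l) (unmarked l) w
    _ = ∑ u : Fin w.length → Fin 2, X (List.ofFn u) * leMurakamiTerm 0 (List.ofFn u) w :=
        hX.markedSum_eq_sum h1 w.length _
    _ = X w := by
        rw [Finset.sum_eq_single_of_mem w.get (mem_univ _) fun u _ hu => ?_]
        · simp [leMurakamiTerm, delta]
        · have hw : w ≠ List.ofFn u := fun h =>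
            hu (List.ofFn_injective (h.symm.trans (List.ofFn_get w).symm))
          simp [leMurakamiTerm, delta, hw]

end LeMurakami

/-! ### The logarithm of a group-like series -/

section LogKernel

variable {K : Type} [Field K] {n : ℕ}

/-- The matrix coefficients expressing `(X - 1)ᵏ` linearly in `X`, for all group-like `X` at once
(see `IsGroupLike.powF_sub_oneF`). -/
def powKernel (K : Type) [Field K] {n : ℕ} : ℕ → List (Fin n) → List (Fin n) → K
  | 0, w, v => if w = [] ∧ v = [] then 1 else 0
  | k + 1, w, v => ∑ i ∈ range (v.length + 1), if v.take i = [] then 0 else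
      ∑ c : Fin (v.length - i) → Fin n,
        shuf w (v.take i) (List.ofFn c) * powKernel K k (List.ofFn c) (v.drop i)

theorem powKernel_succ (k : ℕ) (w : List (Fin n)) {v : List (Fin n)} {N : ℕ}
    (hN : v.length = N) :
    powKernel K (k + 1) w v = ∑ i ∈ range (N + 1), if v.take i = [] then 0 else
      ∑ c : Fin (N - i) → Fin n,
        shuf w (v.take i) (List.ofFn c) * powKernel K k (List.ofFn c) (v.drop i) := by
  subst hN
  rfl

theorem IsGroupLike.powF_sub_oneF {X : Fhat K n} (hX : IsGroupLike X) (k : ℕ)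
    {v : List (Fin n)} {N : ℕ} (hN : v.length = N) :
    powF (X - oneF) k v = ∑ c : Fin N → Fin n, powKernel K k (List.ofFn c) v * X (List.ofFn c) := by
  induction k generalizing v N with
  | zero =>
    subst hN
    rcases v with _ | ⟨a, v⟩ <;> simp [powF, oneF, powKernel, hX.1]
  | succ k ih =>
    simp only [powF, mulF, powKernel, Finset.sum_mul]
    rw [Finset.sum_comm]
    refine Finset.sum_congr rfl fun i _ => ?_
    have hlen (c : Fin (v.length - i) → Fin n) :
        (v.take i).length + (List.ofFn c).length = N := by
      rw [List.length_ofFn, ← List.length_drop, ← List.length_append, List.take_append_drop, hN]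
    split_ifs with h
    · simp [h, hX.1, oneF]
    · simp only [Pi.sub_apply, oneF, h, if_false, sub_zero, ih List.length_drop, Finset.mul_sum,
        Finset.sum_mul]
      rw [Finset.sum_comm]
      refine Finset.sum_congr rfl fun c _ => ?_
      rw [mul_left_comm, ← hX.2, coprodF_eq_sum X _ _ (hlen c), Finset.mul_sum]
      exact Finset.sum_congr rfl fun d _ => by ring

theorem perm_of_powKernel_ne_zero {k : ℕ} {w v : List (Fin n)} (h : powKernel K k w v ≠ 0) :
    w.Perm v := by
  induction k generalizing w v with
  | zero =>
    obtain ⟨rfl, rfl⟩ := (ite_ne_right_iff.mp h).1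
    rfl
  | succ k ih =>
    obtain ⟨i, _, hi⟩ := Finset.exists_ne_zero_of_sum_ne_zero h
    obtain ⟨c, _, hc⟩ := Finset.exists_ne_zero_of_sum_ne_zero (ite_ne_left_iff.mp hi).2.symm
    have hw := perm_of_shuf_ne_zero fun h0 => left_ne_zero_of_mul hc (by rw [h0, Nat.cast_zero])
    simpa using hw.trans ((ih (right_ne_zero_of_mul hc)).append_left (v.take i))

theorem shuf_map (σ : Equiv.Perm (Fin n)) (w u v : List (Fin n)) :
    shuf (w.map σ) (u.map σ) (v.map σ) = shuf w u v := by
  induction w generalizing u v with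
  | nil => simp [shuf]
  | cons a w ih =>
    rcases u with _ | ⟨b, u⟩ <;> rcases v with _ | ⟨c, v⟩ <;> simp [shuf, ← ih]

theorem powKernel_map (σ : Equiv.Perm (Fin n)) (k : ℕ) (w v : List (Fin n)) :
    powKernel K k (w.map σ) (v.map σ) = powKernel K k w v := by
  induction k generalizing w v with
  | zero => simp [powKernel]
  | succ k ih =>
    have hsum {N : ℕ} (F : List (Fin n) → K) :
        ∑ c : Fin N → Fin n, F ((List.ofFn c).map σ) = ∑ c : Fin N → Fin n, F (List.ofFn c) := by
      simp only [List.map_ofFn]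
      exact (Equiv.arrowCongr (Equiv.refl (Fin N)) σ).sum_comp fun c => F (List.ofFn c)
    rw [powKernel_succ k _ (List.length_map σ), powKernel_succ k w rfl]
    simp only [← List.map_take, ← List.map_drop, List.map_eq_nil_iff]
    refine Finset.sum_congr rfl fun i _ => ?_
    rw [← hsum fun c => shuf (w.map σ) ((v.take i).map σ) c * powKernel K k c ((v.drop i).map σ)]
    simp only [shuf_map, ih]

/-- The matrix coefficients expressing `log X` linearly in `X`, for all group-like `X` at once
(see `IsGroupLike.logF_eq_sum`). -/
def logKernel (K : Type) [Field K] {n : ℕ} (w v : List (Fin n)) : K :=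
  ∑ k ∈ Icc 1 v.length, (-1) ^ (k + 1) * (k : K)⁻¹ * powKernel K k w v

theorem IsGroupLike.logF_eq_sum {X : Fhat K n} (hX : IsGroupLike X) {v : List (Fin n)} {N : ℕ}
    (hN : v.length = N) :
    logF X v = ∑ c : Fin N → Fin n, logKernel K (List.ofFn c) v * X (List.ofFn c) := by
  subst hN
  simp only [logF, hX.powF_sub_oneF _ rfl, logKernel, Finset.mul_sum, Finset.sum_mul]
  rw [Finset.sum_comm]
  simp only [mul_assoc]

theorem perm_of_logKernel_ne_zero {w v : List (Fin n)} (h : logKernel K w v ≠ 0) : w.Perm v := by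
  obtain ⟨k, _, hk⟩ := Finset.exists_ne_zero_of_sum_ne_zero h
  exact perm_of_powKernel_ne_zero (right_ne_zero_of_mul hk)

theorem logKernel_map (σ : Equiv.Perm (Fin n)) (w v : List (Fin n)) :
    logKernel K (w.map σ) (v.map σ) = logKernel K w v := by
  simp only [logKernel, powKernel_map, List.length_map]

theorem powF_map {m : ℕ} (φ : Fin m → Fin n) (X : Fhat K n) (k : ℕ) (u : List (Fin m)) :
    powF X k (u.map φ) = powF (fun w => X (w.map φ)) k u := by
  induction k generalizing u with
  | zero => simp [powF, oneF]
  | succ k ih => simp [powF, mulF, ← List.map_take, ← List.map_drop, ih]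

theorem logF_map {m : ℕ} (φ : Fin m → Fin n) (X : Fhat K n) (u : List (Fin m)) :
    logF X (u.map φ) = logF (fun w => X (w.map φ)) u := by
  have h : (fun w : List (Fin m) => (X - oneF : Fhat K n) (w.map φ)) =
      (fun w => X (w.map φ)) - oneF :=
    funext fun w => by simp [oneF]
  simp only [logF, powF_map, h, List.length_map]

end LogKernel

section ProdExp

variable {K : Type} [Field K] {n : ℕ}

/-- The product `e^{x_{a₁}} ⋯ e^{x_{aₖ}}` along a word `a₁ ⋯ aₖ`. -/
def prodExp (K : Type) [Field K] {n : ℕ} (l : List (Fin n)) : Fhat K n :=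
  prodListF (l.map fun a => expF (delta [a]))

theorem expF_delta (a : Fin n) (w : List (Fin n)) :
    (expF (delta [a]) : Fhat K n) w = if ∀ b ∈ w, b = a then (w.length.factorial : K)⁻¹ else 0 := by
  simpa using expF_smul_delta (1 : K) a w

theorem prodExp_isGroupLike [CharZero K] (l : List (Fin n)) : IsGroupLike (prodExp K l) := by
  induction l with
  | nil => exact oneF_isGroupLike
  | cons a l ih =>
    have ha := expF_smul_delta_isGroupLike (1 : K) a
    rw [one_smul] at ha
    exact mulF_isGroupLike ha ih

theorem prodExp_eq_zero_of_notMem {l u : List (Fin n)} {b : Fin n} (hbu : b ∈ u) (hbl : b ∉ l) :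
    prodExp K l u = 0 := by
  induction l generalizing u with
  | nil => exact if_neg (List.ne_nil_of_mem hbu)
  | cons a l ih =>
    rw [List.mem_cons, not_or] at hbl
    rw [prodExp, List.map_cons, prodListF, ← prodExp]
    refine Finset.sum_eq_zero fun i _ => ?_
    rw [← List.take_append_drop i u, List.mem_append] at hbu
    rcases hbu with hb | hb
    · rw [expF_delta, if_neg fun h => hbl.1 (h b hb), zero_mul]
    · exact mul_eq_zero_of_right _ (ih hb hbl.2)

theorem prodExp_of_perm {l u : List (Fin n)} (hl : l.Nodup) (hu : u.Perm l) :
    prodExp K l u = if u = l then 1 else 0 := by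
  induction l generalizing u with
  | nil => simp [hu.eq_nil, prodExp, prodListF, oneF]
  | cons a l ih =>
    rw [List.nodup_cons] at hl
    obtain ⟨hal, hl⟩ := hl
    obtain ⟨b, u, rfl⟩ := List.exists_cons_of_length_eq_add_one hu.length_eq
    have hfirst : prodExp K l (b :: u) = 0 :=
      prodExp_eq_zero_of_notMem (hu.mem_iff.mpr List.mem_cons_self) hal
    have hmul : prodExp K (a :: l) (b :: u) =
        mulF (leftDeriv b (expF (delta [a]))) (prodExp K l) u := by
      rw [prodExp, List.map_cons, prodListF, ← prodExp, mulF_cons, hfirst, mul_zero, zero_add]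
    rw [hmul]
    by_cases hb : b = a
    · subst hb
      rw [List.perm_cons] at hu
      have hexp : mulF (leftDeriv b (expF (delta [b]))) (prodExp K l) u = prodExp K l u := by
        rcases u with _ | ⟨c, u⟩
        · simp [mulF_nil, leftDeriv, expF_delta]
        · have hc : c ≠ b := fun h => hal (hu.mem_iff.mp (h ▸ List.mem_cons_self))
          have hzero : leftDeriv c (leftDeriv b (expF (delta [b] : Fhat K n))) = 0 :=
            funext fun w => by simp [leftDeriv, expF_delta, hc]
          rw [mulF_cons, hzero, zero_mulF]
          simp [leftDeriv, expF_delta]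
      simp [hexp, ih hl hu]
    · have hzero : leftDeriv b (expF (delta [a] : Fhat K n)) = 0 :=
        funext fun w => by simp [leftDeriv, expF_delta, hb]
      simp [hzero, zero_mulF, hb]

end ProdExp

section LogFormula

variable {K : Type} [Field K] {n m : ℕ}

theorem sum_fun_eq_sum_perm {α M : Type*} [Fintype α] [DecidableEq α] [AddCommMonoid M]
    {F : (α → α) → M} (hF : ∀ u, ¬ Function.Injective u → F u = 0) :
    ∑ u, F u = ∑ σ : Equiv.Perm α, F σ := by
  refine (Finset.sum_of_injOn (fun σ : Equiv.Perm α => ⇑σ) DFunLike.coe_injective.injOn (by simp)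
    (fun u _ hu => hF u fun hinj => hu ?_) fun σ _ => rfl).symm
  exact ⟨Equiv.ofBijective u (Finite.injective_iff_bijective.mp hinj), by simp, rfl⟩

theorem pushF_eq_sum (φ : Fin m → Fin n) (f : Fhat K m) {v : List (Fin n)} {N : ℕ}
    (hN : v.length = N) :
    pushF φ f v = ∑ u : Fin N → Fin m, if (List.ofFn u).map φ = v then f (List.ofFn u) else 0 := by
  subst hN
  rfl

variable [CharZero K]

theorem logF_prodExp_ofFn (σ : Equiv.Perm (Fin m)) :
    logF (prodExp K (List.finRange m)) (List.ofFn σ) =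
      logKernel K (List.finRange m) (List.ofFn σ) := by
  have hσ : (List.ofFn σ).Perm (List.finRange m) := by
    rw [← List.ofFn_id]
    exact Equiv.Perm.ofFn_comp_perm σ id
  rw [(prodExp_isGroupLike _).logF_eq_sum List.length_ofFn, Finset.sum_eq_single_of_mem id
    (mem_univ _) fun c _ hc => ?_]
  · rw [List.ofFn_id, prodExp_of_perm (List.nodup_finRange m) (List.Perm.refl _), if_pos rfl,
      mul_one]
  · by_cases hker : logKernel K (List.ofFn c) (List.ofFn σ) = 0
    · rw [hker, zero_mul]
    · have hne : List.ofFn c ≠ List.finRange m :=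
        List.ofFn_id m ▸ fun h => hc (List.ofFn_injective h)
      rw [prodExp_of_perm (List.nodup_finRange m) ((perm_of_logKernel_ne_zero hker).trans hσ),
        if_neg hne, mul_zero]

/-- Both sides are read off the universal kernel: the coefficient of `log X` at the word `φ` is
that of a pulled back series at `1 ⋯ m`, and the series `e^{x₁} ⋯ e^{xₘ}` has a single nonzero
coefficient at the permutations of `1 ⋯ m`. -/
theorem IsGroupLike.logF_ofFn {X : Fhat K n} (hX : IsGroupLike X) (φ : Fin m → Fin n) :
    logF X (List.ofFn φ) = ∑ σ : Equiv.Perm (Fin m),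
      X (List.ofFn (φ ∘ σ.symm)) * logF (prodExp K (List.finRange m)) (List.ofFn σ) := by
  have hzero (u : Fin m → Fin m) (hu : ¬ Function.Injective u) :
      logKernel K (List.ofFn u) (List.finRange m) * X ((List.ofFn u).map φ) = 0 := by
    by_contra h
    have hperm := perm_of_logKernel_ne_zero (left_ne_zero_of_mul h)
    exact hu (List.nodup_ofFn.mp (hperm.nodup_iff.mpr (List.nodup_finRange m)))
  rw [List.ofFn_eq_map, logF_map, (hX.comp_map φ).logF_eq_sum List.length_finRange,
    sum_fun_eq_sum_perm hzero, ← Equiv.sum_comp (Equiv.inv (Equiv.Perm (Fin m)))]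
  refine Finset.sum_congr rfl fun σ _ => ?_
  have hσ : (List.ofFn ⇑σ⁻¹).map σ = List.finRange m := by simp [List.map_ofFn, ← List.ofFn_id]
  rw [Equiv.inv_apply, ← logKernel_map σ, hσ, ← List.ofFn_eq_map, ← logF_prodExp_ofFn,
    List.map_ofFn, mul_comm]
  rfl

theorem CBHword_ofFn (c : Fin m → Fin n) :
    (CBHword (List.ofFn c) : Fhat K n) = pushF c (CBHuniv K m) := by
  have h (l : List (Fin n)) (hl : l.length = m) :
      (CBHword l : Fhat K n) = pushF (fun i => l.get (i.cast hl.symm)) (CBHuniv K m) := by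
    subst hl
    rfl
  rw [h _ List.length_ofFn]
  congr 1
  funext i
  simp

theorem CBHword_ofFn_apply_ofFn (c φ : Fin m → Fin n) :
    (CBHword (List.ofFn c) : Fhat K n) (List.ofFn φ) = ∑ σ : Equiv.Perm (Fin m),
      if c = φ ∘ σ.symm then logF (prodExp K (List.finRange m)) (List.ofFn σ) else 0 := by
  rw [CBHword_ofFn, pushF_eq_sum _ _ List.length_ofFn, sum_fun_eq_sum_perm fun u hu => ?_]
  · refine Finset.sum_congr rfl fun σ _ => ?_
    have hiff : (List.ofFn σ).map c = List.ofFn φ ↔ c = φ ∘ σ.symm := by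
      rw [List.map_ofFn, List.ofFn_inj, Equiv.eq_comp_symm]
    simp only [hiff, CBHuniv, List.length_ofFn, List.nodup_ofFn.mpr σ.injective, and_self, if_true,
      prodExp, ← List.ofFn_eq_map]
  · simp [CBHuniv, List.nodup_ofFn, hu]

theorem CBHword_eq_zero_of_length_ne {w v : List (Fin n)} (h : v.length ≠ w.length) :
    (CBHword w : Fhat K n) v = 0 := by
  simp [CBHword, pushF, CBHuniv, h]

theorem CBHword_nil : (CBHword [] : Fhat K n) [] = 0 := by
  simp [CBHword, pushF, CBHuniv, logF]

theorem cbhHat_eq_sum (X : Fhat K n) {v : List (Fin n)} {N : ℕ} (hN : v.length = N) :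
    cbhHat X v = ∑ c : Fin N → Fin n, X (List.ofFn c) * CBHword (List.ofFn c) v := by
  subst hN
  rfl

theorem cbhHat_eq_tsum [TopologicalSpace K] (X : Fhat K n) (v : List (Fin n)) :
    cbhHat X v =
      ∑' m : ℕ, ∑ c : Fin (m + 1) → Fin n, X (List.ofFn c) * CBHword (List.ofFn c) v := by
  have hzero {m : ℕ} (hm : v.length ≠ m) :
      ∑ c : Fin m → Fin n, X (List.ofFn c) * CBHword (List.ofFn c) v = 0 :=
    Finset.sum_eq_zero fun c _ => by
      rw [CBHword_eq_zero_of_length_ne (by rwa [List.length_ofFn]), mul_zero]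
  rcases v with _ | ⟨a, v⟩
  · rw [cbhHat_eq_sum X rfl, tsum_congr fun m => hzero (Nat.succ_ne_zero m).symm, tsum_zero]
    simp [CBHword_nil]
  · rw [tsum_eq_single v.length fun m hm => hzero fun h => hm (Nat.succ_injective h).symm,
      cbhHat_eq_sum X (List.length_cons)]

theorem IsGroupLike.logF_eq_cbhHat {X : Fhat K n} (hX : IsGroupLike X) : logF X = cbhHat X := by
  funext v
  obtain ⟨m, φ, rfl⟩ : ∃ m, ∃ φ : Fin m → Fin n, v = List.ofFn φ :=
    ⟨_, v.get, (List.ofFn_get v).symm⟩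
  rw [hX.logF_ofFn, cbhHat_eq_sum X List.length_ofFn]
  simp only [CBHword_ofFn_apply_ofFn, Finset.mul_sum, mul_ite, mul_zero]
  rw [Finset.sum_comm]
  simp

end LogFormula

/-! ### Solutions of the KZ equation -/

section KZSolution

/-- The pole of the coefficient of `A_a` in the KZ equation: `0` for `A₀` and `1` for `A₁`. -/
def kzPole (a : Fin 2) : ℝ := (a : ℕ)

/-- `G` is the solution of the KZ equation on `]0,1[` with `G(z) ∼ |z - p|^{A_a}` as `z` tends to
the pole `p` of `A_a`. No absolute value is written since `Real.log x` is `log |x|`. -/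
structure IsKZSolutionAt (G : ℝ → Fhat ℝ 2) (a : Fin 2) : Prop where
  hasDerivAt : ∀ z ∈ Set.Ioo (0 : ℝ) 1, ∀ w,
    HasDerivAt (fun t => G t w) (mulF (kzA z) (G z) w) z
  tendsto_mulF : ∀ w,
    Tendsto (fun z => mulF (G z) (expF ((-Real.log (z - kzPole a)) • delta [a])) w)
      (nhdsWithin (kzPole a) (Set.Ioo 0 1)) (nhds (oneF w))

theorem kzA_mulF_nil (z : ℝ) (X : Fhat ℝ 2) : mulF (kzA z) X [] = 0 := by
  simp [mulF_nil, kzA, delta]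

theorem leftDeriv_kzA_mulF (z : ℝ) (b : Fin 2) (X : Fhat ℝ 2) :
    leftDeriv b (mulF (kzA z) X) = (z - kzPole b)⁻¹ • X := by
  funext w
  rw [leftDeriv, kzA, add_mulF, smul_mulF, smul_mulF]
  simp only [Pi.add_apply, Pi.smul_apply, delta_singleton_mulF_cons, kzPole]
  fin_cases b <;> simp

instance nhdsWithin_kzPole_neBot (a : Fin 2) :
    (nhdsWithin (kzPole a) (Set.Ioo 0 1)).NeBot := by
  rw [← mem_closure_iff_nhdsWithin_neBot, closure_Ioo zero_ne_one]
  fin_cases a <;> simp [kzPole]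

theorem eq_of_hasDerivAt_zero_of_tendsto {f : ℝ → ℝ} {a b p c : ℝ}
    [(nhdsWithin p (Set.Ioo a b)).NeBot] (hf : ∀ z ∈ Set.Ioo a b, HasDerivAt f 0 z)
    (hc : Tendsto f (nhdsWithin p (Set.Ioo a b)) (nhds c)) {z : ℝ} (hz : z ∈ Set.Ioo a b) :
    f z = c := by
  refine tendsto_nhds_unique (tendsto_const_nhds.congr' ?_) hc
  filter_upwards [self_mem_nhdsWithin] with y hy
  exact isOpen_Ioo.is_const_of_deriv_eq_zero isPreconnected_Ioo
    (fun x hx => (hf x hx).differentiableAt.differentiableWithinAt)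
    (fun x hx => (hf x hx).deriv) hz hy

namespace IsKZSolutionAt

variable {G : ℝ → Fhat ℝ 2} {a : Fin 2} (hG : IsKZSolutionAt G a)

include hG

theorem hasDerivAt_cons {z : ℝ} (hz : z ∈ Set.Ioo (0 : ℝ) 1) (b : Fin 2) (w : List (Fin 2)) :
    HasDerivAt (fun t => G t (b :: w)) ((z - kzPole b)⁻¹ * G z w) z :=
  (hG.hasDerivAt z hz (b :: w)).congr_deriv (congrFun (leftDeriv_kzA_mulF z b (G z)) w)

theorem apply_nil {z : ℝ} (hz : z ∈ Set.Ioo (0 : ℝ) 1) : G z [] = 1 := by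
  refine eq_of_hasDerivAt_zero_of_tendsto (f := fun x => G x []) (p := kzPole a)
    (fun x hx => ?_) ?_ hz
  · simpa only [kzA_mulF_nil] using hG.hasDerivAt x hx []
  · simpa only [mulF_nil, expF_smul_delta_nil, mul_one, oneF, if_true] using hG.tendsto_mulF []

theorem hasDerivAt_coprodDefect_cons_cons {z : ℝ} (hz : z ∈ Set.Ioo (0 : ℝ) 1) (b c : Fin 2)
    (u v : List (Fin 2)) :
    HasDerivAt (fun t => coprodDefect (G t) (b :: u) (c :: v))
      ((z - kzPole b)⁻¹ * coprodDefect (G z) u (c :: v) +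
        (z - kzPole c)⁻¹ * coprodDefect (G z) (b :: u) v) z := by
  have hcoprod : HasDerivAt (fun t => coprodF (G t) (b :: u) (c :: v))
      (coprodF (mulF (kzA z) (G z)) (b :: u) (c :: v)) z :=
    HasDerivAt.fun_sum fun d _ => (hG.hasDerivAt z hz (List.ofFn d)).const_mul _
  refine (hcoprod.sub
    ((hG.hasDerivAt_cons hz b u).mul (hG.hasDerivAt_cons hz c v))).congr_deriv ?_
  simp only [coprodF_cons_cons, leftDeriv_kzA_mulF, coprodF_smul, coprodDefect]
  ring

theorem tendsto_coprodDefect {u v : List (Fin 2)}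
    (h : ∀ z ∈ Set.Ioo (0 : ℝ) 1, ∀ u' v', u'.length + v'.length < u.length + v.length →
      coprodDefect (G z) u' v' = 0) :
    Tendsto (fun z => coprodDefect (G z) u v) (nhdsWithin (kzPole a) (Set.Ioo 0 1)) (nhds 0) := by
  have hcoprod := tendsto_finsetSum Finset.univ fun (c : Fin (u.length + v.length) → Fin 2) _ =>
    (hG.tendsto_mulF (List.ofFn c)).const_mul (shuf (List.ofFn c) u v : ℝ)
  have hlim := hcoprod.sub ((hG.tendsto_mulF u).mul (hG.tendsto_mulF v))
  have hone := oneF_isGroupLike.coprodDefect_eq_zero (K := ℝ) u v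
  rw [coprodDefect, coprodF] at hone
  rw [hone] at hlim
  refine hlim.congr' ?_
  filter_upwards [self_mem_nhdsWithin] with z hz
  have hE := expF_smul_delta_isGroupLike (-Real.log (z - kzPole a)) a
  have hmul := coprodDefect_mulF (hG.apply_nil hz) hE.1 (h z hz)
    fun u' v' _ => hE.coprodDefect_eq_zero u' v'
  rwa [hE.coprodDefect_eq_zero, add_zero] at hmul

theorem isGroupLike {z : ℝ} (hz : z ∈ Set.Ioo (0 : ℝ) 1) : IsGroupLike (G z) := by
  suffices H : ∀ u v, ∀ z ∈ Set.Ioo (0 : ℝ) 1, coprodDefect (G z) u v = 0 from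
    ⟨hG.apply_nil hz, fun u v => sub_eq_zero.mp (H u v z hz)⟩
  intro u v
  induction hN : u.length + v.length using Nat.strong_induction_on generalizing u v with
  | _ N ih =>
  subst hN
  intro z hz
  rcases u with _ | ⟨b, u⟩
  · exact coprodDefect_nil_left (hG.apply_nil hz) v
  rcases v with _ | ⟨c, v⟩
  · exact coprodDefect_nil_right (hG.apply_nil hz) _
  refine eq_of_hasDerivAt_zero_of_tendsto (p := kzPole a) (fun x hx => ?_)
    (hG.tendsto_coprodDefect fun x hx u' v' h => ih _ h u' v' rfl x hx) hz
  refine (hG.hasDerivAt_coprodDefect_cons_cons hx b c u v).congr_deriv ?_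
  rw [ih _ (by simp) u (c :: v) rfl x hx, ih _ (by simp) (b :: u) v rfl x hx, mul_zero, mul_zero,
    add_zero]

theorem tendsto_concat {b : Fin 2} (hb : b ≠ a) (w : List (Fin 2)) :
    Tendsto (fun z => G z (w ++ [b])) (nhdsWithin (kzPole a) (Set.Ioo 0 1)) (nhds 0) := by
  simpa only [mulF_expF_smul_delta_concat hb, oneF, List.append_eq_nil_iff, List.cons_ne_nil,
    and_false, if_false] using hG.tendsto_mulF (w ++ [b])

theorem apply_singleton {z : ℝ} (hz : z ∈ Set.Ioo (0 : ℝ) 1) (b : Fin 2) :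
    G z [b] = Real.log (z - kzPole b) := by
  have hne {x : ℝ} (hx : x ∈ Set.Ioo (0 : ℝ) 1) : x - kzPole b ≠ 0 := by
    fin_cases b <;> simp [kzPole, hx.1.ne', sub_ne_zero, hx.2.ne]
  refine sub_eq_zero.mp (eq_of_hasDerivAt_zero_of_tendsto (p := kzPole a)
    (f := fun x => G x [b] - Real.log (x - kzPole b)) (fun x hx => ?_) ?_ hz)
  · refine ((hG.hasDerivAt_cons hx b []).sub
      (((hasDerivAt_id x).sub_const _).log (hne hx))).congr_deriv ?_
    simp [hG.apply_nil hx]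
  · by_cases hb : b = a
    · subst hb
      have hlim := hG.tendsto_mulF [b]
      rw [oneF, if_neg (List.cons_ne_nil b [])] at hlim
      refine hlim.congr' ?_
      filter_upwards [self_mem_nhdsWithin] with x hx
      rw [mulF_cons, mulF_nil, leftDeriv, hG.apply_nil hx, expF_smul_delta, expF_smul_delta_nil]
      simp [neg_add_eq_sub]
    · have hpole : kzPole a - kzPole b = 1 ∨ kzPole a - kzPole b = -1 := by
        fin_cases a <;> fin_cases b <;> simp [kzPole] at hb ⊢
      have hlog : ContinuousAt (fun x => Real.log (x - kzPole b)) (kzPole a) :=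
        (continuousAt_id.sub continuousAt_const).log (by rcases hpole with h | h <;> simp [h])
      have hlog0 : Real.log (kzPole a - kzPole b) = 0 := by rcases hpole with h | h <;> simp [h]
      simpa [hlog0] using
        (hG.tendsto_concat hb []).sub (hlog.tendsto.mono_left nhdsWithin_le_nhds)

end IsKZSolutionAt

end KZSolution

section AsymptoticsAtOne

/-- `f` grows more slowly at `1⁻` than every negative power of `1 - z`. -/
def Tempered (f : ℝ → ℝ) : Prop :=
  ∀ δ : ℝ, 0 < δ →
    Tendsto (fun z => f z * (1 - z) ^ δ) (nhdsWithin 1 (Set.Ioo 0 1)) (nhds 0)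

theorem tendsto_one_sub_nhdsGT_zero :
    Tendsto (fun z : ℝ => 1 - z) (nhdsWithin 1 (Set.Ioo 0 1)) (nhdsWithin 0 (Set.Ioi 0)) := by
  refine tendsto_nhdsWithin_iff.mpr ⟨?_, ?_⟩
  · exact ((continuous_const.sub continuous_id).tendsto' 1 0 (sub_self 1)).mono_left
      nhdsWithin_le_nhds
  · filter_upwards [self_mem_nhdsWithin] with z hz using sub_pos.mpr hz.2

theorem tendsto_one_sub_rpow {δ : ℝ} (hδ : 0 < δ) :
    Tendsto (fun z : ℝ => (1 - z) ^ δ) (nhdsWithin 1 (Set.Ioo 0 1)) (nhds 0) := by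
  have h := (Real.continuousAt_rpow_const 0 δ (Or.inr hδ.le)).tendsto
  rw [Real.zero_rpow hδ.ne'] at h
  exact h.comp (tendsto_nhds_of_tendsto_nhdsWithin tendsto_one_sub_nhdsGT_zero)

theorem Tempered.of_tendsto {f : ℝ → ℝ} {c : ℝ}
    (h : Tendsto f (nhdsWithin 1 (Set.Ioo 0 1)) (nhds c)) : Tempered f := fun δ hδ => by
  simpa using h.mul (tendsto_one_sub_rpow hδ)

theorem tempered_const (c : ℝ) : Tempered fun _ => c :=
  Tempered.of_tendsto tendsto_const_nhds

theorem Tempered.mul {f g : ℝ → ℝ} (hf : Tempered f) (hg : Tempered g) :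
    Tempered fun z => f z * g z := by
  intro δ hδ
  have h := (hf (δ / 2) (half_pos hδ)).mul (hg (δ / 2) (half_pos hδ))
  rw [mul_zero] at h
  refine h.congr' ?_
  filter_upwards [self_mem_nhdsWithin] with z hz
  rw [mul_mul_mul_comm, ← Real.rpow_add (sub_pos.mpr hz.2), add_halves]

theorem Tempered.sub {f g : ℝ → ℝ} (hf : Tempered f) (hg : Tempered g) :
    Tempered fun z => f z - g z := fun δ hδ => by
  simpa [sub_mul] using (hf δ hδ).sub (hg δ hδ)

theorem Tempered.sum {ι : Type*} {s : Finset ι} {f : ι → ℝ → ℝ} (h : ∀ i ∈ s, Tempered (f i)) :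
    Tempered fun z => ∑ i ∈ s, f i z := fun δ hδ => by
  simpa [Finset.sum_mul] using tendsto_finsetSum s fun i hi => h i hi δ hδ

theorem Tempered.pow {f : ℝ → ℝ} (hf : Tempered f) (k : ℕ) : Tempered fun z => f z ^ k := by
  induction k with
  | zero => simpa using tempered_const 1
  | succ k ih => simpa only [pow_succ] using ih.mul hf

theorem kzPole_one : kzPole 1 = 1 := by
  simp [kzPole]

theorem log_sub_one (z : ℝ) : Real.log (z - 1) = Real.log (1 - z) := by
  rw [← Real.log_neg_eq_log, neg_sub]

theorem tempered_log_sub_one : Tempered fun z => -Real.log (z - 1) := fun δ hδ => by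
  simpa [Function.comp_def, log_sub_one] using
    ((tendsto_log_mul_rpow_nhdsGT_zero hδ).comp tendsto_one_sub_nhdsGT_zero).neg

theorem tempered_expF {n : ℕ} (a : Fin n) (w : List (Fin n)) :
    Tempered fun z => expF ((-Real.log (z - 1)) • delta [a]) w := by
  simp only [expF_smul_delta]
  split_ifs
  · exact (tempered_const _).mul (tempered_log_sub_one.pow _)
  · exact tempered_const 0

theorem tendsto_div_one_sub_rpow_of_tempered_deriv {f f' : ℝ → ℝ}
    (hf : ∀ z ∈ Set.Ioo (0 : ℝ) 1, HasDerivAt f (f' z) z)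
    (h0 : Tendsto f (nhdsWithin 1 (Set.Ioo 0 1)) (nhds 0)) (hf' : Tempered f') :
    Tendsto (fun z => f z / (1 - z) ^ (1 / 2 : ℝ)) (nhdsWithin 1 (Set.Ioo 0 1)) (nhds 0) := by
  have hderiv (z : ℝ) (hz : z ∈ Set.Ioo (0 : ℝ) 1) :
      HasDerivAt (fun z : ℝ => (1 - z) ^ (1 / 2 : ℝ))
        (-(1 / 2) * (1 - z) ^ (-(1 / 2) : ℝ)) z := by
    refine (((hasDerivAt_id z).const_sub 1).rpow_const
      (Or.inl (sub_pos.mpr hz.2).ne')).congr_deriv ?_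
    norm_num
  have hlim := (hf' (1 / 2) (by norm_num)).const_mul (-2)
  have hsqrt := tendsto_one_sub_rpow (δ := 1 / 2) (by norm_num)
  rw [mul_zero] at hlim
  rw [nhdsWithin_Ioo_eq_nhdsLT one_pos] at h0 hsqrt ⊢
  refine HasDerivAt.lhopital_zero_left_on_Ioo one_pos hf hderiv (fun z hz => ?_) h0 hsqrt ?_
  · exact mul_ne_zero (by norm_num) (Real.rpow_pos_of_pos (sub_pos.mpr hz.2) _).ne'
  · rw [← nhdsWithin_Ioo_eq_nhdsLT one_pos]
    refine hlim.congr' ?_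
    filter_upwards [self_mem_nhdsWithin] with z hz
    have hpos := Real.rpow_pos_of_pos (sub_pos.mpr hz.2) (1 / 2)
    rw [Real.rpow_neg (sub_pos.mpr hz.2).le]
    field_simp

theorem tendsto_mul_of_tempered_deriv {f f' g : ℝ → ℝ}
    (hf : ∀ z ∈ Set.Ioo (0 : ℝ) 1, HasDerivAt f (f' z) z)
    (h0 : Tendsto f (nhdsWithin 1 (Set.Ioo 0 1)) (nhds 0)) (hf' : Tempered f')
    (hg : Tempered g) :
    Tendsto (fun z => f z * g z) (nhdsWithin 1 (Set.Ioo 0 1)) (nhds 0) := by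
  have h := (tendsto_div_one_sub_rpow_of_tempered_deriv hf h0 hf').mul (hg (1 / 2) (by norm_num))
  rw [mul_zero] at h
  refine h.congr' ?_
  filter_upwards [self_mem_nhdsWithin] with z hz
  have hpos := Real.rpow_pos_of_pos (sub_pos.mpr hz.2) (1 / 2)
  field_simp

namespace IsKZSolutionAt

variable {G G₀ : ℝ → Fhat ℝ 2} {Φ : Fhat ℝ 2}

theorem tempered (hG : IsKZSolutionAt G 1) (w : List (Fin 2)) : Tempered fun z => G z w := by
  induction hN : w.length using Nat.strong_induction_on generalizing w with
  | _ N ih =>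
  subst hN
  have hlim := hG.tendsto_mulF w
  simp only [kzPole_one] at hlim
  have hrest := Tempered.sum (s := range w.length) fun i hi =>
    (ih (w.take i).length (by simpa using Finset.mem_range.mp hi) (w.take i) rfl).mul
      (tempered_expF 1 (w.drop i))
  simpa only [mulF_eq_add_sum (expF_smul_delta_nil _ _), add_sub_cancel_right] using
    (Tempered.of_tendsto hlim).sub hrest

/-- Killing the divergent factor `(1 - z)^{-A₁}` needs a rate of convergence for the shorter
words, and this comes from the derivative `G z u / z` of `G z (0 :: u)` being tempered. -/
theorem tendsto_zero_cons (hG : IsKZSolutionAt G 1) (u : List (Fin 2)) :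
    Tendsto (fun z => G z (0 :: u)) (nhdsWithin 1 (Set.Ioo 0 1)) (nhds 0) := by
  induction hN : u.length using Nat.strong_induction_on generalizing u with
  | _ N ih =>
  subst hN
  have hinv : Tempered fun z => (z - kzPole 0)⁻¹ :=
    .of_tendsto <| ((continuousAt_id.sub continuousAt_const).inv₀
      (by simp [kzPole])).tendsto.mono_left nhdsWithin_le_nhds
  have hrest := tendsto_finsetSum (range u.length) fun i hi =>
    tendsto_mul_of_tempered_deriv (fun z hz => hG.hasDerivAt_cons hz 0 (u.take i))
      (ih _ (by simpa using Finset.mem_range.mp hi) _ rfl) (hinv.mul (hG.tempered _))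
      (tempered_expF 1 (u.drop i))
  have hlim := hG.tendsto_mulF (0 :: u)
  simp only [kzPole_one] at hlim
  have h := hlim.sub hrest
  rw [oneF, if_neg (List.cons_ne_nil 0 u), Finset.sum_const_zero, sub_zero] at h
  refine h.congr fun z => ?_
  rw [mulF_cons, mulF_eq_add_sum (expF_smul_delta_nil _ _), expF_smul_delta, if_neg (by simp)]
  simp [leftDeriv]

theorem tendsto_of_mulF_eq (hG : IsKZSolutionAt G 1)
    (hΦ : ∀ z ∈ Set.Ioo (0 : ℝ) 1, mulF (G z) Φ = G₀ z) (u : List (Fin 2)) :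
    Tendsto (fun z => G₀ z (0 :: u)) (nhdsWithin 1 (Set.Ioo 0 1)) (nhds (Φ (0 :: u))) := by
  have h := (tendsto_finsetSum (range (u.length + 1)) fun i _ =>
    (hG.tendsto_zero_cons (u.take i)).mul_const (Φ (u.drop i))).const_add (Φ (0 :: u))
  simp only [zero_mul, Finset.sum_const_zero, add_zero] at h
  refine h.congr' ?_
  filter_upwards [self_mem_nhdsWithin] with z hz
  rw [← hΦ z hz, mulF_cons, hG.apply_nil hz, one_mul]
  rfl

end IsKZSolutionAt

end AsymptoticsAtOne

/-! ### Iterated integrals -/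

section Simplex

/-- The simplex `{0 ≤ t₁ ≤ ⋯ ≤ t_m ≤ z}`, so that `simplex01 m` is `simplexTo m 1`. -/
def simplexTo (m : ℕ) (z : ℝ) : Set (Fin m → ℝ) :=
  {t | Monotone t ∧ ∀ j, t j ∈ Set.Icc 0 z}

theorem isClosed_simplexTo (m : ℕ) (z : ℝ) : IsClosed (simplexTo m z) := by
  simp only [simplexTo, Set.ofPred_and, Set.ofPred_forall]
  exact isClosed_monotone.inter
    (isClosed_iInter fun j => isClosed_Icc.preimage (continuous_apply j))

theorem measurableSet_simplexTo (m : ℕ) (z : ℝ) : MeasurableSet (simplexTo m z) :=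
  (isClosed_simplexTo m z).measurableSet

theorem simplexTo_zero (z : ℝ) : simplexTo 0 z = Set.univ :=
  Set.eq_univ_of_forall fun t => ⟨Subsingleton.monotone t, fun j => j.elim0⟩

theorem snoc_mem_simplexTo {m : ℕ} {z s : ℝ} {t : Fin m → ℝ} :
    (Fin.snoc t s : Fin (m + 1) → ℝ) ∈ simplexTo (m + 1) z ↔
      s ∈ Set.Icc 0 z ∧ t ∈ simplexTo m s := by
  constructor
  · rintro ⟨hmono, hmem⟩
    refine ⟨by simpa using hmem (Fin.last m), fun i j hij => ?_, fun j => ⟨?_, ?_⟩⟩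
    · simpa using hmono (Fin.castSucc_le_castSucc_iff.mpr hij)
    · simpa using (hmem j.castSucc).1
    · simpa using hmono (Fin.le_last j.castSucc)
  · rintro ⟨hs, hmono, hmem⟩
    refine ⟨fun i j hij => ?_, Fin.lastCases (by simpa using hs) fun j => ?_⟩
    · induction j using Fin.lastCases with
      | last => induction i using Fin.lastCases with
        | last => exact le_rfl
        | cast i => simpa using (hmem i).2
      | cast j => induction i using Fin.lastCases with
        | last => exact absurd hij (Fin.castSucc_lt_last j).not_ge
        | cast i => simpa using hmono (Fin.castSucc_le_castSucc_iff.mp hij)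
    · simpa using ⟨(hmem j).1, (hmem j).2.trans hs.2⟩

theorem lintegral_simplexTo_succ (m : ℕ) (z : ℝ) {F : (Fin (m + 1) → ℝ) → ENNReal}
    (hF : Measurable F) :
    ∫⁻ t in simplexTo (m + 1) z, F t =
      ∫⁻ s in Set.Icc 0 z, ∫⁻ t in simplexTo m s, F (Fin.snoc t s) := by
  have hFind := hF.indicator (measurableSet_simplexTo (m + 1) z)
  have hsymm := (volume_preserving_piFinSuccAbove (fun _ : Fin (m + 1) => ℝ) (Fin.last m)).symm
  have hsnoc (s : ℝ) (t : Fin m → ℝ) :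
      (MeasurableEquiv.piFinSuccAbove (fun _ : Fin (m + 1) => ℝ) (Fin.last m)).symm (s, t) =
        Fin.snoc t s := Fin.insertNth_last' s t
  have hmeas : Measurable fun p => (simplexTo (m + 1) z).indicator F
      ((MeasurableEquiv.piFinSuccAbove (fun _ : Fin (m + 1) => ℝ) (Fin.last m)).symm p) :=
    hFind.comp hsymm.measurable
  rw [← lintegral_indicator (measurableSet_simplexTo _ _), ← hsymm.lintegral_comp hFind,
    Measure.volume_eq_prod, lintegral_prod _ hmeas.aemeasurable,
    ← lintegral_indicator measurableSet_Icc]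
  refine lintegral_congr fun s => ?_
  simp only [hsnoc]
  by_cases hs : s ∈ Set.Icc 0 z
  · rw [Set.indicator_of_mem hs, ← lintegral_indicator (measurableSet_simplexTo _ _)]
    refine lintegral_congr fun t => ?_
    by_cases ht : t ∈ simplexTo m s <;> simp [snoc_mem_simplexTo, hs, ht]
  · simp [snoc_mem_simplexTo, hs]

end Simplex

theorem lintegral_Icc_of_hasDerivAt_of_tendsto {g g' : ℝ → ℝ} {a b l r : ℝ} (hab : a < b)
    (hg : ∀ x ∈ Set.Ioo a b, HasDerivAt g (g' x) x) (hpos : ∀ x ∈ Set.Ioo a b, 0 ≤ g' x)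
    (ha : Tendsto g (nhdsWithin a (Set.Ioi a)) (nhds l))
    (hb : Tendsto g (nhdsWithin b (Set.Iio b)) (nhds r)) :
    l ≤ r ∧ ∫⁻ x in Set.Icc a b, ENNReal.ofReal (g' x) = ENNReal.ofReal (r - l) := by
  have hgcont : ContinuousOn g (Set.Ioo a b) := fun x hx =>
    (hg x hx).continuousAt.continuousWithinAt
  have hcont := continuousOn_Icc_extendFrom_Ioo hgcont ha hb
  have hderiv (x : ℝ) (hx : x ∈ Set.Ioo a b) :
      HasDerivAt (extendFrom (Set.Ioo a b) g) (g' x) x := by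
    refine (hg x hx).congr_of_eventuallyEq ?_
    filter_upwards [isOpen_Ioo.mem_nhds hx] with y hy
    exact extendFrom_extends hgcont y hy
  have hint := intervalIntegral.integrableOn_deriv_of_nonneg hcont hderiv hpos
  have hFTC := intervalIntegral.integral_eq_sub_of_hasDerivAt_of_tendsto hab hg
    ((intervalIntegrable_iff_integrableOn_Ioc_of_le hab.le).mpr hint) ha hb
  rw [intervalIntegral.integral_of_le hab.le, integral_Ioc_eq_integral_Ioo] at hFTC
  have hpos' : 0 ≤ᵐ[volume.restrict (Set.Ioo a b)] g' :=
    (ae_restrict_mem measurableSet_Ioo).mono hpos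
  constructor
  · exact sub_nonneg.mp (hFTC ▸ integral_nonneg_of_ae hpos')
  · rw [setLIntegral_congr Ioo_ae_eq_Icc.symm, ← hFTC, ofReal_integral_eq_lintegral_ofReal
      (hint.mono_set Set.Ioo_subset_Ioc_self) hpos']

section Omega

/-- The sign of `1 / (z - p)` on `]0,1[`, for `p` the pole of `A_b`. -/
def kzSign (b : Fin 2) : ℝ := (-1) ^ (b : ℕ)

theorem kzSign_mul_self (b : Fin 2) : kzSign b * kzSign b = 1 := by
  simp [kzSign, ← mul_pow]

theorem kzSign_mul_inv_nonneg (b : Fin 2) {z : ℝ} (hz : z ∈ Set.Icc (0 : ℝ) 1) :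
    0 ≤ kzSign b * (z - kzPole b)⁻¹ := by
  fin_cases b <;> simp [kzSign, kzPole, hz.1, hz.2]

theorem prod_kzSign_mul_self {m : ℕ} (a : Fin m → Fin 2) :
    (∏ j, kzSign (a j)) * ∏ j, kzSign (a j) = 1 := by
  simp [← Finset.prod_mul_distrib, kzSign_mul_self]

/-- The integral of `∏ |ω_{a_j}|` over the simplex below `z`. Being a Lebesgue integral of a
nonnegative function, it can be computed one variable at a time before it is known to be finite. -/
def absIteratedIntegral {m : ℕ} (a : Fin m → Fin 2) (z : ℝ) : ENNReal :=
  ∫⁻ t in simplexTo m z, ∏ j, ENNReal.ofReal (kzSign (a j) * (t j - kzPole (a j))⁻¹)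

theorem measurable_prod_ofReal_kzSign_mul {m : ℕ} (a : Fin m → Fin 2) :
    Measurable fun t : Fin m → ℝ =>
      ∏ j, ENNReal.ofReal (kzSign (a j) * (t j - kzPole (a j))⁻¹) := by
  fun_prop

theorem absIteratedIntegral_succ {m : ℕ} (a : Fin (m + 1) → Fin 2) (z : ℝ) :
    absIteratedIntegral a z = ∫⁻ s in Set.Icc 0 z,
      absIteratedIntegral (fun j => a j.castSucc) s *
        ENNReal.ofReal (kzSign (a (Fin.last m)) * (s - kzPole (a (Fin.last m)))⁻¹) := by
  rw [absIteratedIntegral, lintegral_simplexTo_succ m z (measurable_prod_ofReal_kzSign_mul a)]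
  simp only [Fin.prod_univ_castSucc, Fin.snoc_castSucc, Fin.snoc_last]
  simp only [lintegral_mul_const _ (measurable_prod_ofReal_kzSign_mul _), absIteratedIntegral]

theorem omegaMZV_eq_of_absIteratedIntegral_eq {m : ℕ} {a : Fin m → Fin 2} {x : ℝ}
    (hx : 0 ≤ (∏ j, kzSign (a j)) * x)
    (h : absIteratedIntegral a 1 = ENNReal.ofReal ((∏ j, kzSign (a j)) * x)) :
    omegaMZV a = x := by
  have hcoef (b : Fin 2) (z : ℝ) :
      (if b = 0 then z⁻¹ else (z - 1)⁻¹) = kzSign b * (kzSign b * (z - kzPole b)⁻¹) := by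
    rw [← mul_assoc, kzSign_mul_self, one_mul]
    fin_cases b <;> simp [kzPole]
  have hnonneg (t : Fin m → ℝ) (ht : t ∈ simplexTo m 1) (j : Fin m) :
      0 ≤ kzSign (a j) * (t j - kzPole (a j))⁻¹ := kzSign_mul_inv_nonneg (a j) (ht.2 j)
  have habs : ∫ t in simplexTo m 1, ∏ j, kzSign (a j) * (t j - kzPole (a j))⁻¹ =
      (∏ j, kzSign (a j)) * x := by
    rw [integral_eq_lintegral_of_nonneg_ae, ← ENNReal.toReal_ofReal hx, ← h]
    · refine congrArg ENNReal.toReal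
        (setLIntegral_congr_fun (measurableSet_simplexTo m 1) fun t ht => ?_)
      exact ENNReal.ofReal_prod_of_nonneg fun j _ => hnonneg t ht j
    · filter_upwards [ae_restrict_mem (measurableSet_simplexTo m 1)] with t ht
      exact Finset.prod_nonneg fun j _ => hnonneg t ht j
    · exact (by fun_prop : Measurable fun t : Fin m → ℝ =>
        ∏ j, kzSign (a j) * (t j - kzPole (a j))⁻¹).aestronglyMeasurable
  calc omegaMZV a
      = ∫ t in simplexTo m 1, (∏ j, kzSign (a j)) *
          ∏ j, kzSign (a j) * (t j - kzPole (a j))⁻¹ := by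
        simp only [omegaMZV, hcoef, Finset.prod_mul_distrib]
        rfl
    _ = x := by
        rw [integral_const_mul, habs, ← mul_assoc, prod_kzSign_mul_self, one_mul]

namespace IsKZSolutionAt

variable {G : ℝ → Fhat ℝ 2}

theorem tendsto_revWord (hG : IsKZSolutionAt G 0) {m : ℕ} (a : Fin (m + 1) → Fin 2)
    (ha : a 0 = 1) :
    Tendsto (fun s => G s (revWord a)) (nhdsWithin 0 (Set.Ioi 0)) (nhds 0) := by
  rw [revWord_succ, ha, ← nhdsWithin_Ioo_eq_nhdsGT one_pos]
  simpa [kzPole] using hG.tendsto_concat one_ne_zero (revWord fun j => a j.succ)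

/-- Since `G s (revWord a)` is a primitive in `s` of the coefficient of the shorter word, it is
computed by iterated integration from `0`, where it vanishes if `a_1 = 1`. -/
theorem absIteratedIntegral_eq (hG : IsKZSolutionAt G 0) {m : ℕ} {a : Fin m → Fin 2}
    (ha : ∀ h : 0 < m, a ⟨0, h⟩ = 1) {z r : ℝ} (hz : z ∈ Set.Ioc (0 : ℝ) 1)
    (hr : Tendsto (fun s => G s (revWord a)) (nhdsWithin z (Set.Iio z)) (nhds r)) :
    0 ≤ (∏ j, kzSign (a j)) * r ∧
      absIteratedIntegral a z = ENNReal.ofReal ((∏ j, kzSign (a j)) * r) := by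
  have hmem {s : ℝ} (hs : s ∈ Set.Ioo 0 z) : s ∈ Set.Ioo (0 : ℝ) 1 :=
    ⟨hs.1, hs.2.trans_le hz.2⟩
  induction m generalizing z r with
  | zero =>
    have hr1 : r = 1 := tendsto_nhds_unique hr <| tendsto_const_nhds.congr' <| by
      filter_upwards [Ioo_mem_nhdsLT hz.1] with s hs using (hG.apply_nil (hmem hs)).symm
    simp [absIteratedIntegral, simplexTo_zero, volume_pi, hr1]
  | succ m ih =>
    set b := a (Fin.last m)
    set a' := fun j : Fin m => a j.castSucc
    have hinner (s : ℝ) (hs : s ∈ Set.Ioo 0 z) := ih (a := a') (fun _ => ha m.succ_pos)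
      (Set.Ioo_subset_Ioc_self (hmem hs))
      ((hG.hasDerivAt s (hmem hs) _).continuousAt.tendsto.mono_left nhdsWithin_le_nhds)
      fun hx => ⟨hx.1, hx.2.trans (hmem hs).2⟩
    have habs {s : ℝ} (hs : s ∈ Set.Ioo 0 z) : 0 ≤ kzSign b * (s - kzPole b)⁻¹ :=
      kzSign_mul_inv_nonneg b (Set.Ioo_subset_Icc_self (hmem hs))
    have hderiv (s : ℝ) (hs : s ∈ Set.Ioo 0 z) :
        HasDerivAt (fun t => (∏ j, kzSign (a j)) * G t (revWord a))
          ((∏ j, kzSign (a' j)) * G s (revWord a') * (kzSign b * (s - kzPole b)⁻¹)) s := by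
      rw [revWord_succ_last, Fin.prod_univ_castSucc]
      exact ((hG.hasDerivAt_cons (hmem hs) b _).const_mul _).congr_deriv (by ring)
    have hint := lintegral_Icc_of_hasDerivAt_of_tendsto hz.1 hderiv
      (fun s hs => mul_nonneg (hinner s hs).1 (habs hs))
      ((hG.tendsto_revWord a (ha m.succ_pos)).const_mul _) (hr.const_mul _)
    rw [mul_zero, sub_zero] at hint
    refine ⟨hint.1, ?_⟩
    rw [absIteratedIntegral_succ, ← hint.2, setLIntegral_congr Ioo_ae_eq_Icc.symm,
      setLIntegral_congr Ioo_ae_eq_Icc.symm]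
    refine setLIntegral_congr_fun measurableSet_Ioo fun s hs => ?_
    rw [(hinner s hs).2, ← ENNReal.ofReal_mul (hinner s hs).1]

theorem omegaMZV_eq_of_tendsto (hG : IsKZSolutionAt G 0) {m : ℕ} {a : Fin (m + 1) → Fin 2}
    (ha : a 0 = 1) {r : ℝ}
    (hr : Tendsto (fun s => G s (revWord a)) (nhdsWithin 1 (Set.Ioo 0 1)) (nhds r)) :
    omegaMZV a = r := by
  rw [nhdsWithin_Ioo_eq_nhdsLT one_pos] at hr
  obtain ⟨hnonneg, h⟩ := hG.absIteratedIntegral_eq (fun _ => ha) ⟨one_pos, le_rfl⟩ hr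
  exact omegaMZV_eq_of_absIteratedIntegral_eq hnonneg h

end IsKZSolutionAt

end Omega

/-! ### The KZ associator -/

section Associator

theorem IsGroupLike.sum_Ccoef {X : Fhat ℝ 2} (hX : IsGroupLike X) (h1 : ∀ a, X [a] = 0)
    {m : ℕ} (i : Fin (m + 1) → Fin 2) :
    ∑ a : Fin (m + 1) → Fin 2,
      (if a 0 = 1 ∧ a (Fin.last m) = 0 then X (revWord a) * Ccoef a i else 0) = X (revWord i) := by
  have hlength : (revWord i).length = m + 1 := length_revWord i
  have hsum := hX.sum_mul_LMelem h1 (revWord i)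
  rw [hlength] at hsum
  rw [← hsum]
  refine Finset.sum_congr rfl fun a _ => ?_
  rw [Ccoef, ← revWord_eq_ofFn_rev]
  split_ifs with ha
  · rfl
  · obtain h | h : a 0 = 0 ∨ a (Fin.last m) = 1 := by omega
    · simp [LMelem_eq_zero_of_first a h]
    · simp [LMelem_eq_zero_of_last a h]

variable {G₀ G₁ : ℝ → Fhat ℝ 2} {Φ : Fhat ℝ 2}

theorem isGroupLike_of_mulF_eq (h₀ : IsKZSolutionAt G₀ 0) (h₁ : IsKZSolutionAt G₁ 1)
    {z : ℝ} (hz : z ∈ Set.Ioo (0 : ℝ) 1) (hΦ : mulF (G₁ z) Φ = G₀ z) : IsGroupLike Φ :=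
  IsGroupLike.of_mulF (h₁.isGroupLike hz) (hΦ ▸ h₀.isGroupLike hz)

theorem apply_singleton_eq_zero_of_mulF_eq (h₀ : IsKZSolutionAt G₀ 0)
    (h₁ : IsKZSolutionAt G₁ 1) {z : ℝ} (hz : z ∈ Set.Ioo (0 : ℝ) 1)
    (hΦ : mulF (G₁ z) Φ = G₀ z) (b : Fin 2) : Φ [b] = 0 := by
  have h := congrFun hΦ [b]
  rw [mulF_cons, mulF_nil, leftDeriv, h₁.apply_nil hz, h₁.apply_singleton hz,
    h₀.apply_singleton hz, (isGroupLike_of_mulF_eq h₀ h₁ hz hΦ).1] at h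
  simpa using h

theorem omegaMZV_eq_of_mulF_eq (h₀ : IsKZSolutionAt G₀ 0) (h₁ : IsKZSolutionAt G₁ 1)
    (hΦ : ∀ z ∈ Set.Ioo (0 : ℝ) 1, mulF (G₁ z) Φ = G₀ z) {m : ℕ} {a : Fin (m + 1) → Fin 2}
    (ha : a 0 = 1 ∧ a (Fin.last m) = 0) : omegaMZV a = Φ (revWord a) := by
  refine h₀.omegaMZV_eq_of_tendsto ha.1 ?_
  rw [revWord_succ_last, ha.2]
  exact h₁.tendsto_of_mulF_eq hΦ _

/-- The Le–Murakami expansion of the associator, in degree `m + 1` and paired with a function `f`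
of the words. -/
theorem sum_omegaMZV_mul_Ccoef (h₀ : IsKZSolutionAt G₀ 0) (h₁ : IsKZSolutionAt G₁ 1)
    (hΦ : ∀ z ∈ Set.Ioo (0 : ℝ) 1, mulF (G₁ z) Φ = G₀ z) (m : ℕ) (f : List (Fin 2) → ℝ) :
    (∑ a : Fin (m + 1) → Fin 2, ∑ i : Fin (m + 1) → Fin 2,
      if a 0 = 1 ∧ a (Fin.last m) = 0 then
        omegaMZV a * Ccoef a i * f (List.ofFn fun j => i (Fin.rev j)) else 0) =
    ∑ c : Fin (m + 1) → Fin 2, Φ (List.ofFn c) * f (List.ofFn c) := by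
  have hz : (1 / 2 : ℝ) ∈ Set.Ioo (0 : ℝ) 1 := by norm_num
  rw [Finset.sum_comm, ← sum_revWord fun w => Φ w * f w]
  refine Finset.sum_congr rfl fun i _ => ?_
  rw [← (isGroupLike_of_mulF_eq h₀ h₁ hz (hΦ _ hz)).sum_Ccoef
    (apply_singleton_eq_zero_of_mulF_eq h₀ h₁ hz (hΦ _ hz)) i, Finset.sum_mul,
    ← revWord_eq_ofFn_rev]
  refine Finset.sum_congr rfl fun a _ => ?_
  split_ifs with ha
  · rw [omegaMZV_eq_of_mulF_eq h₀ h₁ hΦ ha]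
  · rw [zero_mul]

end Associator

/-- **Corollary 3: the logarithm of the KZ associator.**  Let
`G₀, G₁ : ]0,1[ → F̂₂` be the solutions of the KZ equation
`G'(z) = (A₀/z + A₁/(z-1)) G(z)` (coefficientwise, for every word `w`) with
`G₀(z) ∼ z^{A₀}` as `z → 0⁺` and `G₁(z) ∼ (1-z)^{A₁}` as `z → 1⁻` (i.e.
`G₀(z)·z^{-A₀} → 1` and `G₁(z)·(1-z)^{-A₁} → 1` coefficientwise), and let
`Φ ∈ F̂₂` be the KZ associator, the renormalized holonomy determined by
`G₀(z) = G₁(z)·Φ`.  Then, coefficientwise on every word `v` (only the terms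
`n = |v|` contribute),
`log Φ = ∑_{n ≥ 1} ∑_{(a₁,…,aₙ) admissible, (i₁,…,iₙ) ∈ {0,1}ⁿ}
  ω_{a₁,…,aₙ} C^{a₁,…,aₙ}_{i₁,…,iₙ} CBHₙ(A_{iₙ}, …, A_{i₁})`,
where a sequence `(a₁,…,aₙ)` is admissible when `a₁ = 1` and `aₙ = 0`
(below `n = m + 1 ≥ 1`, sequences are indexed by `Fin (m+1)`, and
`CBHₙ(A_{iₙ},…,A_{i₁}) = CBHword [iₙ,…,i₁] ∈ f̂₂ ⊆ F̂₂`). -/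
theorem log_KZ_associator
    (G₀ G₁ : ℝ → Fhat ℝ 2)
    (hG₀ : ∀ z ∈ Set.Ioo (0 : ℝ) 1, ∀ w : List (Fin 2),
      HasDerivAt (fun t => G₀ t w) (mulF (kzA z) (G₀ z) w) z)
    (hG₁ : ∀ z ∈ Set.Ioo (0 : ℝ) 1, ∀ w : List (Fin 2),
      HasDerivAt (fun t => G₁ t w) (mulF (kzA z) (G₁ z) w) z)
    (hG₀asym : ∀ w : List (Fin 2),
      Tendsto (fun z => mulF (G₀ z) (expF ((-Real.log z) • delta [(0 : Fin 2)])) w)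
        (nhdsWithin 0 (Set.Ioo (0 : ℝ) 1)) (nhds (oneF w)))
    (hG₁asym : ∀ w : List (Fin 2),
      Tendsto (fun z => mulF (G₁ z) (expF ((-Real.log (1 - z)) • delta [(1 : Fin 2)])) w)
        (nhdsWithin 1 (Set.Ioo (0 : ℝ) 1)) (nhds (oneF w)))
    (Φ : Fhat ℝ 2)
    (hΦ : ∀ z ∈ Set.Ioo (0 : ℝ) 1, mulF (G₁ z) Φ = G₀ z) :
    ∀ v : List (Fin 2),
      logF Φ v =
        ∑' m : ℕ, ∑ a : Fin (m + 1) → Fin 2, ∑ i : Fin (m + 1) → Fin 2,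
          if a 0 = 1 ∧ a (Fin.last m) = 0 then
            omegaMZV a * Ccoef a i *
              CBHword (List.ofFn fun j => i (Fin.rev j)) v
          else 0 := by
  intro v
  have h₀ : IsKZSolutionAt G₀ 0 :=
    ⟨hG₀, by simpa only [kzPole, Fin.val_zero, Nat.cast_zero, sub_zero] using hG₀asym⟩
  have h₁ : IsKZSolutionAt G₁ 1 :=
    ⟨hG₁, by simpa only [kzPole_one, log_sub_one] using hG₁asym⟩
  have hz : (1 / 2 : ℝ) ∈ Set.Ioo (0 : ℝ) 1 := by norm_num
  have hgroup : IsGroupLike Φ := isGroupLike_of_mulF_eq h₀ h₁ hz (hΦ _ hz)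
  calc logF Φ v
      = cbhHat Φ v := by rw [hgroup.logF_eq_cbhHat]
    _ = ∑' m : ℕ, ∑ c : Fin (m + 1) → Fin 2, Φ (List.ofFn c) * CBHword (List.ofFn c) v :=
        cbhHat_eq_tsum Φ v
    _ = _ := tsum_congr fun m =>
        (sum_omegaMZV_mul_Ccoef h₀ h₁ hΦ m fun w => CBHword w v).symm

end CBHPaper
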